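/- One-shot Chong–Motani–Garg–El Gamal inner bound, pre-elimination (rate-splitting) form. Let 0 < ε < 1 and set L := log₂(1/ε). Let Q, U₁, 𝒳₁, U₂, 𝒳₂ be finite sets and let p(q)·p(u₁,x₁|q)·p(u₂,x₂|q) be a joint probability distribution on Q × U₁ × 𝒳₁ × U₂ × 𝒳₂ (i.e., (U₁,X₁) and (U₂,X₂) are conditionally independent given Q). For each (x₁,x₂) let ρ_{x₁,x₂} be a density matrix on ℂ^{d₁} ⊗ ℂ^{d₂}. Let ρ^{QU₁X₁U₂X₂Y₁Y₂} := Σ p(q)p(u₁,x₁|q)p(u₂,x₂|q) |q,u₁,x₁,u₂,x₂⟩⟨q,u₁,x₁,u₂,x₂| ⊗ ρ_{x₁,x₂} be the associated cq-state, with respect to which all information quantities below are computed (Y₁ obtained by tracing out ℂ^{d₂}, Y₂ by tracing out ℂ^{d₁}). Let N'₁, N''₁, N'₂, N''₂ be positive integers and set R'₁ := log₂ N'₁, R''₁ := log₂ N''₁, R'₂ := log₂ N'₂, R''₂ := log₂ N''₂, R₁ := R'₁ + R''₁, R₂ := R'₂ + R''₂. Suppose: R''₁ ≤ I_H^ε(X₁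 : Y₁ | U₁U₂Q) − 2 − L; R₁ ≤ I_H^ε(X₁ : Y₁ | U₂Q) − 2 − L; R''₁ + R'₂ ≤ I_H^ε(X₁U₂ : Y₁ | U₁Q) − 2 − L; R₁ + R'₂ ≤ I_H^ε(X₁U₂ : Y₁ | Q) − 2 − L; R''₂ ≤ I_H^ε(X₂ : Y₂ | U₁U₂Q) − 2 − L; R₂ ≤ I_H^ε(X₂ : Y₂ | U₁Q) − 2 − L; R''₂ + R'₁ ≤ I_H^ε(X₂U₁ : Y₂ | U₂Q) − 2 − L; R₂ + R'₁ ≤ I_H^ε(X₂U₁ : Y₂ | Q) − 2 − L. Then there exists an (N'₁·N''₁, N'₂·N''₂, 2^{2^{14}}·ε^{1/6}) interference-channel code for the family {ρ_{x₁,x₂}}. -/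

import Mathlib

/-!
The code is a random superposition code. Given the time-sharing symbol `q`, each sender draws
independent cloud centres `u_i` and, around each of them, conditionally independent satellites
`x_{ik}`; the message is the pair `(i, k)`. Receiver 1 has to find `(i, k)` and also makes use of
the other sender's cloud index `j`, which it need not decode correctly; receiver 2 is symmetric.
Both error probabilities are averaged over the codebooks, combined through
`1 - Λ ⊗ Λ' ≤ (1 - Λ) ⊗ 1 + 1 ⊗ (1 - Λ')` (`acc_kron`), and a good codebook is then fixed
(`exists_le_of_avg`).

A false candidate `(i', k', j')` is of one of four types, according to whether `i' = i` and whether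
`j' = j`, and each of the four information quantities of the receiver supplies an optimal test
against one type (`DH_test`). The difficulty is to use four noncommuting tests simultaneously: for
every candidate one operator is needed that is accepted by the right state and that is dominated,
for each type of false candidate, by the test made for that type. This is achieved by tilting.
After rounding, the tests are projections (`round_exists`). The output space is tensored with label
spaces for `i` and `j`, and the state belonging to `(i, ·, j)` is rotated by a small angle, with
squared sine `t`, from the blank label towards the label `i`, and then towards the label `j`. In the
enlarged space, states with a different label are distinguishable enough that a single projection
`L` can impose one test on states tilted towards its own label and another test on all the
others. `L` is the projection onto the kernel of the sum `G` of the two tilted complementary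
projections and of the projection onto the foreign labels. The spectrum of `G` has a gap above
zero because the two tilted subspaces meet at an angle bounded away from zero, and this gap controls
how often `L` rejects the right state (`tilt`, `tilt_label`, and `tilt_two` for both labels).

The projections for the different values of `j` are merged by `T ↦ 1 - (1 + cT)⁻¹`, a soft version
of the projection onto the union of their ranges (`soft_union`); this is what makes the decoding of
`j` non-unique. The operators of the various `(i, k)` are normalised to a measurement by the
Hayashi–Nagaoka inequality (`hayashi_nagaoka`). The true state is within distance of order
`√t` of its tilted version, so `conj_near` transfers the bound back. The outcome, `decoder`, is
`1 - D_{ik} ≤ (32/t²) Σ (1 - E) + (16/t) Σ_{(i',k') ≠ (i,k)} Σ_{j'} E + 16 t`.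
Averaging over the codebook, each missed detection and each type of false alarm contributes at most
`ε` in total. With `t = ε^{1/3}` the error of a receiver is at most `208 t`, and
`416 t ≤ 2^{2^14} ε^{1/6}`.
-/

open Kronecker ComplexOrder

noncomputable section

/-- A probability distribution on a finite set: nonnegative and summing to one. -/
def IsProbDist {S : Type*} [Fintype S] (P : S → ℝ) : Prop :=
  (∀ s, 0 ≤ P s) ∧ ∑ s, P s = 1

/-- A density matrix: positive semidefinite with trace one. -/
def IsDensity {ι : Type*} [Fintype ι] (ρ : Matrix ι ι ℂ) : Prop :=
  ρ.PosSemidef ∧ ρ.trace = 1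

/-- A POVM element: `0 ≤ E ≤ I` in the Loewner order. -/
def IsPOVMElem {ι : Type*} [Fintype ι] [DecidableEq ι] (E : Matrix ι ι ℂ) : Prop :=
  E.PosSemidef ∧ ((1 : Matrix ι ι ℂ) - E).PosSemidef

/-- The hypothesis testing relative entropy `D_H^ε(α‖β)`, as an extended real:
the supremum of all `d : ℝ` such that some POVM element `E` accepts `α` with probability
at least `1 − ε` while accepting `β` with probability at most `2^{−d}`. -/
def DH {ι : Type*} [Fintype ι] [DecidableEq ι] (ε : ℝ) (α β : Matrix ι ι ℂ) : EReal :=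
  sSup ((fun d : ℝ => (d : EReal)) ''
    {d | ∃ E : Matrix ι ι ℂ, IsPOVMElem E ∧ 1 - ε ≤ ((E * α).trace).re ∧
      ((E * β).trace).re ≤ (2 : ℝ) ^ (-d)})

/-- The classical-quantum state `Σ_u |u⟩⟨u| ⊗ σ_u` (the weights are included in `σ`). -/
def cqState {U ι : Type*} [Fintype U] [DecidableEq U] [Fintype ι]
    (σ : U → Matrix ι ι ℂ) : Matrix (U × ι) (U × ι) ℂ :=
  Matrix.of fun x y => if x.1 = y.1 then σ x.1 x.2 y.2 else 0

/-- Partial trace over the second (right) tensor factor. -/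
def trR {α β : Type*} [Fintype α] [Fintype β]
    (M : Matrix (α × β) (α × β) ℂ) : Matrix α α ℂ :=
  Matrix.of fun a a' => ∑ b, M (a, b) (a', b)

/-- Partial trace over the first (left) tensor factor. -/
def trL {α β : Type*} [Fintype α] [Fintype β]
    (M : Matrix (α × β) (α × β) ℂ) : Matrix β β ℂ :=
  Matrix.of fun b b' => ∑ a, M (a, b) (a, b')

section Interference

variable {Qt U1 X1 U2 X2 : Type*}
  [Fintype Qt] [Fintype U1] [Fintype X1] [Fintype U2] [Fintype X2]
  [DecidableEq Qt] [DecidableEq U1] [DecidableEq X1] [DecidableEq U2] [DecidableEq X2]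
  {d1 d2 : ℕ}

/-- `p₂(u₂,·|q)`-weighted output state at receiver 1, given inputs `x₁` and (coarse) `u₂`:
`Σ_{x₂} p₂(u₂,x₂|q) · Tr_{Y₂} ρ_{x₁,x₂}`. -/
def w1 (p2 : Qt → U2 × X2 → ℝ)
    (ρ : X1 × X2 → Matrix (Fin d1 × Fin d2) (Fin d1 × Fin d2) ℂ)
    (q : Qt) (x1 : X1) (u2 : U2) : Matrix (Fin d1) (Fin d1) ℂ :=
  ∑ x2, (p2 q (u2, x2) : ℂ) • trR (ρ (x1, x2))

/-- `p₁(u₁,·|q)`-weighted output state at receiver 2, given inputs `x₂` and (coarse) `u₁`. -/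
def w2 (p1 : Qt → U1 × X1 → ℝ)
    (ρ : X1 × X2 → Matrix (Fin d1 × Fin d2) (Fin d1 × Fin d2) ℂ)
    (q : Qt) (x2 : X2) (u1 : U1) : Matrix (Fin d2) (Fin d2) ℂ :=
  ∑ x1, (p1 q (u1, x1) : ℂ) • trL (ρ (x1, x2))

/-- `I_H^ε(X₁ : Y₁ | U₁U₂Q)`. -/
def IH_X1_Y1_U1U2Q (ε : ℝ) (pQ : Qt → ℝ) (p1 : Qt → U1 × X1 → ℝ) (p2 : Qt → U2 × X2 → ℝ)
    (ρ : X1 × X2 → Matrix (Fin d1 × Fin d2) (Fin d1 × Fin d2) ℂ) : EReal :=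
  DH ε
    (cqState fun c : (Qt × U1 × U2) × X1 =>
      ((pQ c.1.1 * p1 c.1.1 (c.1.2.1, c.2) : ℝ) : ℂ) • w1 p2 ρ c.1.1 c.2 c.1.2.2)
    (cqState fun c : (Qt × U1 × U2) × X1 =>
      ((pQ c.1.1 * p1 c.1.1 (c.1.2.1, c.2) / ∑ x, p1 c.1.1 (c.1.2.1, x) : ℝ) : ℂ) •
        ∑ x, (p1 c.1.1 (c.1.2.1, x) : ℂ) • w1 p2 ρ c.1.1 x c.1.2.2)

/-- `I_H^ε(X₁ : Y₁ | U₂Q)`. -/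
def IH_X1_Y1_U2Q (ε : ℝ) (pQ : Qt → ℝ) (p1 : Qt → U1 × X1 → ℝ) (p2 : Qt → U2 × X2 → ℝ)
    (ρ : X1 × X2 → Matrix (Fin d1 × Fin d2) (Fin d1 × Fin d2) ℂ) : EReal :=
  DH ε
    (cqState fun c : (Qt × U2) × X1 =>
      ((pQ c.1.1 * ∑ u1, p1 c.1.1 (u1, c.2) : ℝ) : ℂ) • w1 p2 ρ c.1.1 c.2 c.1.2)
    (cqState fun c : (Qt × U2) × X1 =>
      ((pQ c.1.1 * ∑ u1, p1 c.1.1 (u1, c.2) : ℝ) : ℂ) •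
        ∑ x, ((∑ u1, p1 c.1.1 (u1, x) : ℝ) : ℂ) • w1 p2 ρ c.1.1 x c.1.2)

/-- `I_H^ε(X₁U₂ : Y₁ | U₁Q)`. -/
def IH_X1U2_Y1_U1Q (ε : ℝ) (pQ : Qt → ℝ) (p1 : Qt → U1 × X1 → ℝ) (p2 : Qt → U2 × X2 → ℝ)
    (ρ : X1 × X2 → Matrix (Fin d1 × Fin d2) (Fin d1 × Fin d2) ℂ) : EReal :=
  DH ε
    (cqState fun c : (Qt × U1) × (X1 × U2) =>
      ((pQ c.1.1 * p1 c.1.1 (c.1.2, c.2.1) : ℝ) : ℂ) • w1 p2 ρ c.1.1 c.2.1 c.2.2)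
    (cqState fun c : (Qt × U1) × (X1 × U2) =>
      ((pQ c.1.1 * p1 c.1.1 (c.1.2, c.2.1) * (∑ x2, p2 c.1.1 (c.2.2, x2)) /
          ∑ x, p1 c.1.1 (c.1.2, x) : ℝ) : ℂ) •
        ∑ x, ∑ v2, (p1 c.1.1 (c.1.2, x) : ℂ) • w1 p2 ρ c.1.1 x v2)

/-- `I_H^ε(X₁U₂ : Y₁ | Q)`. -/
def IH_X1U2_Y1_Q (ε : ℝ) (pQ : Qt → ℝ) (p1 : Qt → U1 × X1 → ℝ) (p2 : Qt → U2 × X2 → ℝ)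
    (ρ : X1 × X2 → Matrix (Fin d1 × Fin d2) (Fin d1 × Fin d2) ℂ) : EReal :=
  DH ε
    (cqState fun c : Qt × (X1 × U2) =>
      ((pQ c.1 * ∑ u1, p1 c.1 (u1, c.2.1) : ℝ) : ℂ) • w1 p2 ρ c.1 c.2.1 c.2.2)
    (cqState fun c : Qt × (X1 × U2) =>
      ((pQ c.1 * (∑ u1, p1 c.1 (u1, c.2.1)) * (∑ x2, p2 c.1 (c.2.2, x2)) : ℝ) : ℂ) •
        ∑ x, ∑ v2, ((∑ u1, p1 c.1 (u1, x) : ℝ) : ℂ) • w1 p2 ρ c.1 x v2)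

/-- `I_H^ε(X₂ : Y₂ | U₁U₂Q)`. -/
def IH_X2_Y2_U1U2Q (ε : ℝ) (pQ : Qt → ℝ) (p1 : Qt → U1 × X1 → ℝ) (p2 : Qt → U2 × X2 → ℝ)
    (ρ : X1 × X2 → Matrix (Fin d1 × Fin d2) (Fin d1 × Fin d2) ℂ) : EReal :=
  DH ε
    (cqState fun c : (Qt × U1 × U2) × X2 =>
      ((pQ c.1.1 * p2 c.1.1 (c.1.2.2, c.2) : ℝ) : ℂ) • w2 p1 ρ c.1.1 c.2 c.1.2.1)
    (cqState fun c : (Qt × U1 × U2) × X2 =>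
      ((pQ c.1.1 * p2 c.1.1 (c.1.2.2, c.2) / ∑ x, p2 c.1.1 (c.1.2.2, x) : ℝ) : ℂ) •
        ∑ x, (p2 c.1.1 (c.1.2.2, x) : ℂ) • w2 p1 ρ c.1.1 x c.1.2.1)

/-- `I_H^ε(X₂ : Y₂ | U₁Q)`. -/
def IH_X2_Y2_U1Q (ε : ℝ) (pQ : Qt → ℝ) (p1 : Qt → U1 × X1 → ℝ) (p2 : Qt → U2 × X2 → ℝ)
    (ρ : X1 × X2 → Matrix (Fin d1 × Fin d2) (Fin d1 × Fin d2) ℂ) : EReal :=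
  DH ε
    (cqState fun c : (Qt × U1) × X2 =>
      ((pQ c.1.1 * ∑ u2, p2 c.1.1 (u2, c.2) : ℝ) : ℂ) • w2 p1 ρ c.1.1 c.2 c.1.2)
    (cqState fun c : (Qt × U1) × X2 =>
      ((pQ c.1.1 * ∑ u2, p2 c.1.1 (u2, c.2) : ℝ) : ℂ) •
        ∑ x, ((∑ u2, p2 c.1.1 (u2, x) : ℝ) : ℂ) • w2 p1 ρ c.1.1 x c.1.2)

/-- `I_H^ε(X₂U₁ : Y₂ | U₂Q)`. -/
def IH_X2U1_Y2_U2Q (ε : ℝ) (pQ : Qt → ℝ) (p1 : Qt → U1 × X1 → ℝ) (p2 : Qt → U2 × X2 → ℝ)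
    (ρ : X1 × X2 → Matrix (Fin d1 × Fin d2) (Fin d1 × Fin d2) ℂ) : EReal :=
  DH ε
    (cqState fun c : (Qt × U2) × (X2 × U1) =>
      ((pQ c.1.1 * p2 c.1.1 (c.1.2, c.2.1) : ℝ) : ℂ) • w2 p1 ρ c.1.1 c.2.1 c.2.2)
    (cqState fun c : (Qt × U2) × (X2 × U1) =>
      ((pQ c.1.1 * p2 c.1.1 (c.1.2, c.2.1) * (∑ x1, p1 c.1.1 (c.2.2, x1)) /
          ∑ x, p2 c.1.1 (c.1.2, x) : ℝ) : ℂ) •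
        ∑ x, ∑ v1, (p2 c.1.1 (c.1.2, x) : ℂ) • w2 p1 ρ c.1.1 x v1)

/-- `I_H^ε(X₂U₁ : Y₂ | Q)`. -/
def IH_X2U1_Y2_Q (ε : ℝ) (pQ : Qt → ℝ) (p1 : Qt → U1 × X1 → ℝ) (p2 : Qt → U2 × X2 → ℝ)
    (ρ : X1 × X2 → Matrix (Fin d1 × Fin d2) (Fin d1 × Fin d2) ℂ) : EReal :=
  DH ε
    (cqState fun c : Qt × (X2 × U1) =>
      ((pQ c.1 * ∑ u2, p2 c.1 (u2, c.2.1) : ℝ) : ℂ) • w2 p1 ρ c.1 c.2.1 c.2.2)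
    (cqState fun c : Qt × (X2 × U1) =>
      ((pQ c.1 * (∑ u2, p2 c.1 (u2, c.2.1)) * (∑ x1, p1 c.1 (c.2.2, x1)) : ℝ) : ℂ) •
        ∑ x, ∑ v1, ((∑ u2, p2 c.1 (u2, x) : ℝ) : ℂ) • w2 p1 ρ c.1 x v1)

/-- Existence of an `(N₁, N₂, δ)` interference-channel code for the channel outputs
`ρ_{x₁,x₂}`: encoders and POVMs for the two receivers whose average success probability
is at least `1 − δ`. -/
def ExistsICCode (ρ : X1 × X2 → Matrix (Fin d1 × Fin d2) (Fin d1 × Fin d2) ℂ)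
    (N1 N2 : ℕ) (δ : ℝ) : Prop :=
  ∃ (E1 : Fin N1 → X1) (E2 : Fin N2 → X2)
    (Λ : Fin N1 → Matrix (Fin d1) (Fin d1) ℂ)
    (Λ' : Fin N2 → Matrix (Fin d2) (Fin d2) ℂ),
    (∀ m, (Λ m).PosSemidef) ∧
    ((1 : Matrix (Fin d1) (Fin d1) ℂ) - ∑ m, Λ m).PosSemidef ∧
    (∀ m, (Λ' m).PosSemidef) ∧
    ((1 : Matrix (Fin d2) (Fin d2) ℂ) - ∑ m, Λ' m).PosSemidef ∧
    1 - δ ≤ ((N1 * N2 : ℝ))⁻¹ * ∑ m : Fin N1 × Fin N2,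
      (((Λ m.1 ⊗ₖ Λ' m.2) * ρ (E1 m.1, E2 m.2)).trace).re

namespace CMG

section proof

set_option linter.unusedSectionVars false
set_option linter.unusedVariables false

open MatrixOrder Matrix

/-! ### Operator inequalities -/

section ops
variable {n m : Type*} [Fintype n] [DecidableEq n] [Fintype m] [DecidableEq m]

lemma cont_spec (G : Matrix n n ℂ) (f : ℝ → ℝ) : ContinuousOn f (spectrum ℝ G) :=
  (Matrix.finite_real_spectrum (A := G)).continuousOn f

lemma conj_mono {A B : Matrix n n ℂ} (h : A ≤ B) (K : Matrix n m ℂ) :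
    Kᴴ * A * K ≤ Kᴴ * B * K := by
  rw [Matrix.le_iff] at *
  have := h.conjTranspose_mul_mul_same K
  rwa [Matrix.mul_sub, Matrix.sub_mul] at this

lemma conj_nonneg {A : Matrix n n ℂ} (h : 0 ≤ A) (K : Matrix n m ℂ) : 0 ≤ Kᴴ * A * K := by
  simpa using conj_mono h K

lemma self_nonneg (K : Matrix n m ℂ) : 0 ≤ Kᴴ * K := by
  rw [Matrix.nonneg_iff_posSemidef]; exact Matrix.posSemidef_conjTranspose_mul_self K

lemma herm_of_nonneg {A : Matrix n n ℂ} (h : 0 ≤ A) : Aᴴ = A :=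
  (Matrix.nonneg_iff_posSemidef.1 h).1

/-- Orthogonal projections. -/
def IsProj (P : Matrix n n ℂ) : Prop := Pᴴ = P ∧ P * P = P

lemma IsProj.nonneg {P : Matrix n n ℂ} (h : IsProj P) : 0 ≤ P := by
  have := self_nonneg P
  rwa [h.1, h.2] at this

lemma IsProj.compl {P : Matrix n n ℂ} (h : IsProj P) : IsProj (1 - P) := by
  refine ⟨by simp [h.1], ?_⟩
  simp [mul_sub, sub_mul, h.2]

lemma IsProj.le_one {P : Matrix n n ℂ} (h : IsProj P) : P ≤ 1 :=
  sub_nonneg.1 h.compl.nonneg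

/-- Spectral rounding at the threshold `1/2`: an effect is replaced by a projection, at the cost
of a factor two in both error operators. -/
lemma round_exists {E : Matrix n n ℂ} (h0 : 0 ≤ E) (h1 : E ≤ 1) :
    ∃ P : Matrix n n ℂ, IsProj P ∧ P ≤ (2:ℝ) • E ∧ 1 - P ≤ (2:ℝ) • (1 - E) := by
  have hE : IsSelfAdjoint E := herm_of_nonneg h0
  have s0 : ∀ x ∈ spectrum ℝ E, 0 ≤ x := fun x hx => spectrum_nonneg_of_nonneg h0 hx
  refine ⟨cfc (fun x : ℝ => if 1/2 ≤ x then (1:ℝ) else 0) E, ⟨IsSelfAdjoint.cfc, ?_⟩, ?_, ?_⟩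
  · rw [← cfc_mul _ _ _ (cont_spec _ _) (cont_spec _ _)]
    congr 1; ext x; split_ifs <;> simp
  · have : (2:ℝ) • E = cfc (fun x : ℝ => 2 * x) E := by
      rw [cfc_const_mul _ _ _ (cont_spec _ _), cfc_id' ℝ E]
    rw [this, cfc_le_iff _ _ _ (cont_spec _ _) (cont_spec _ _)]
    intro x hx
    have := s0 x hx
    split_ifs <;> linarith
  · have h2 : (2:ℝ) • (1 - E) = cfc (fun x : ℝ => 2 * (1 - x)) E := by
      rw [cfc_const_mul _ _ _ (cont_spec _ _), cfc_sub _ _ _ (cont_spec _ _) (cont_spec _ _),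
        cfc_id' ℝ E, cfc_const_one ℝ E]
    have h3 : 1 - cfc (fun x : ℝ => if 1/2 ≤ x then (1:ℝ) else 0) E =
       cfc (fun x : ℝ => 1 - if 1/2 ≤ x then (1:ℝ) else 0) E := by
      rw [cfc_sub _ _ _ (cont_spec _ _) (cont_spec _ _), cfc_const_one ℝ E]
    have h4 : ∀ x ∈ spectrum ℝ E, x ≤ 1 := by
      have : cfc (fun x : ℝ => x) E ≤ cfc (fun _ : ℝ => 1) E := by
        rwa [cfc_id' ℝ E, cfc_const_one ℝ E]
      rwa [cfc_le_iff _ _ _ (cont_spec _ _) (cont_spec _ _)] at this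
    rw [h2, h3, cfc_le_iff _ _ _ (cont_spec _ _) (cont_spec _ _)]
    intro x hx
    have := h4 x hx
    split_ifs with h <;> simp <;> linarith

/-- The range projection `F` of a positive `G` all of whose nonzero eigenvalues are at least
`κ`; the spectral gap is expressed by `κ G ≤ G²`. -/
lemma range_proj {G : Matrix n n ℂ} (h0 : 0 ≤ G) {κ : ℝ} (hκ : 0 < κ) (h : κ • G ≤ G * G) :
    ∃ F : Matrix n n ℂ, IsProj F ∧ κ • F ≤ G ∧ F * G = G := by
  have hE : IsSelfAdjoint G := herm_of_nonneg h0
  have s0 : ∀ x ∈ spectrum ℝ G, 0 ≤ x := fun x hx => spectrum_nonneg_of_nonneg h0 hx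
  have h1 : cfc (fun x : ℝ => κ * x) G ≤ cfc (fun x : ℝ => x * x) G := by
    rwa [cfc_const_mul _ _ _ (cont_spec _ _), cfc_mul _ _ _ (cont_spec _ _) (cont_spec _ _),
      cfc_id' ℝ G]
  rw [cfc_le_iff _ _ _ (cont_spec _ _) (cont_spec _ _)] at h1
  refine ⟨cfc (fun x : ℝ => if x = 0 then (0:ℝ) else 1) G, ⟨IsSelfAdjoint.cfc, ?_⟩, ?_, ?_⟩
  · rw [← cfc_mul _ _ _ (cont_spec _ _) (cont_spec _ _)]
    congr 1; ext x; split_ifs <;> simp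
  · rw [← cfc_const_mul _ _ _ (cont_spec _ _)]
    conv_rhs => rw [← cfc_id' ℝ G]
    rw [cfc_le_iff _ _ _ (cont_spec _ _) (cont_spec _ _)]
    intro x hx
    have h2 := s0 x hx
    have h3 := h1 x hx
    split_ifs with h
    · simp [h]
    · have : 0 < x := lt_of_le_of_ne h2 (Ne.symm h)
      simp only [mul_one]
      exact le_of_mul_le_mul_right h3 this
  · conv_lhs => rw [← cfc_id' ℝ G]
    rw [cfc_id' ℝ G]
    conv_lhs => enter [2]; rw [← cfc_id' ℝ G]
    rw [← cfc_mul _ _ _ (cont_spec _ _) (cont_spec _ _)]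
    conv_rhs => rw [← cfc_id' ℝ G]
    congr 1; ext x; split_ifs with h <;> simp [h]

end ops

/-! ### The Hayashi–Nagaoka inequality and soft unions -/

section ops2
variable {n m : Type*} [Fintype n] [DecidableEq n] [Fintype m] [DecidableEq m]

open scoped Matrix.Norms.L2Operator in
/-- Operator monotonicity of the square root, together with `A ≤ √A` for effects. -/
lemma le_sqrt_of_sq_le {A S : Matrix n n ℂ} (hA : 0 ≤ A) (h1 : A ≤ 1) (h : A ≤ S) :
    A ≤ cfc Real.sqrt S := by
  have hS : 0 ≤ S := hA.trans h
  have hE : IsSelfAdjoint A := herm_of_nonneg hA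
  have hSE : IsSelfAdjoint S := herm_of_nonneg hS
  have s0 : ∀ x ∈ spectrum ℝ A, 0 ≤ x := fun x hx => spectrum_nonneg_of_nonneg hA hx
  have h4 : ∀ x ∈ spectrum ℝ A, x ≤ 1 := by
    have : cfc (fun x : ℝ => x) A ≤ cfc (fun _ : ℝ => 1) A := by
      rwa [cfc_id' ℝ A, cfc_const_one ℝ A]
    rwa [cfc_le_iff _ _ _ (cont_spec _ _) (cont_spec _ _)] at this
  have e1 : CFC.sqrt A ≤ CFC.sqrt S := CFC.sqrt_le_sqrt A S h
  rw [CFC.sqrt_eq_real_sqrt A, CFC.sqrt_eq_real_sqrt S, cfcₙ_eq_cfc, cfcₙ_eq_cfc] at e1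
  refine le_trans ?_ e1
  conv_lhs => rw [← cfc_id' ℝ A]
  rw [cfc_le_iff _ _ _ (cont_spec _ _) (cont_spec _ _)]
  intro x hx
  exact Real.le_sqrt_of_sq_le (by nlinarith [s0 x hx, h4 x hx])

/-- The Hayashi–Nagaoka inequality, with `R = S^{-1/2}`. It follows from `A ≤ √S` and the
positivity of `(R - 2)(S - A)(R - 2)` and `(R - 1) A (R - 1)`. -/
lemma hayashi_nagaoka {S : Matrix n n ℂ} {η : ℝ} (hη : 0 < η) (hS : η • (1 : Matrix n n ℂ) ≤ S) :
    ∃ R : Matrix n n ℂ, Rᴴ = R ∧ R * S * R = 1 ∧ ∀ A, 0 ≤ A → A ≤ 1 → A ≤ S →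
      1 - R * A * R ≤ (2:ℝ) • (1 - A) + (4:ℝ) • (S - A) := by
  have hS0 : 0 ≤ S := le_trans (smul_nonneg hη.le zero_le_one) hS
  have hE : IsSelfAdjoint S := herm_of_nonneg hS0
  have hs : ∀ x ∈ spectrum ℝ S, η ≤ x := by
    have : cfc (fun _ : ℝ => η) S ≤ cfc (fun x : ℝ => x) S := by
      rw [cfc_id' ℝ S, cfc_const η S, Algebra.algebraMap_eq_smul_one]; exact hS
    rwa [cfc_le_iff _ _ _ (cont_spec _ _) (cont_spec _ _)] at this
  set R := cfc (fun x : ℝ => (Real.sqrt x)⁻¹) S with hR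
  set Q := cfc Real.sqrt S with hQ
  have hRh : Rᴴ = R := (IsSelfAdjoint.cfc : IsSelfAdjoint R)
  have hQQ : Q * Q = S := by
    rw [hQ, ← cfc_mul _ _ _ (cont_spec _ _) (cont_spec _ _)]
    conv_rhs => rw [← cfc_id' ℝ S]
    refine cfc_congr fun x hx => ?_
    exact Real.mul_self_sqrt (hη.le.trans (hs x hx))
  have hRQ : R * Q = 1 := by
    rw [hR, hQ, ← cfc_mul _ _ _ (cont_spec _ _) (cont_spec _ _), ← cfc_const_one ℝ S]
    refine cfc_congr fun x hx => ?_
    exact inv_mul_cancel₀ (Real.sqrt_pos.2 (hη.trans_le (hs x hx))).ne'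
  have hQR : Q * R = 1 := mul_eq_one_comm.1 hRQ
  have hRS : R * S = Q := by rw [← hQQ, ← mul_assoc, hRQ, one_mul]
  have hSR : S * R = Q := by rw [← hQQ, mul_assoc, hQR, mul_one]
  have hRSR : R * S * R = 1 := by rw [hRS, hQR]
  refine ⟨R, hRh, hRSR, fun A hA h1 h => ?_⟩
  have hAQ : A ≤ Q := le_sqrt_of_sq_le hA h1 h
  have hB : 0 ≤ S - A := sub_nonneg.2 h
  have k1 := conj_nonneg hB (R - (2:ℝ) • 1)
  have k2 := conj_nonneg hA (R - 1)
  simp only [conjTranspose_sub, conjTranspose_smul, conjTranspose_one, hRh, star_trivial] at k1 k2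
  rw [← sub_nonneg] at hAQ ⊢
  have e : (2:ℝ) • (1 - A) + (4:ℝ) • (S - A) - (1 - R * A * R) =
      (R - (2:ℝ) • 1) * (S - A) * (R - (2:ℝ) • 1) + (2:ℝ) • ((R - 1) * A * (R - 1))
       + (4:ℝ) • (Q - A) := by
    simp only [mul_sub, sub_mul, smul_mul_assoc, mul_smul_comm, one_mul, mul_one, hRS, hSR, hQR]
    module
  rw [e]
  have := smul_nonneg (show (0:ℝ) ≤ 2 by norm_num) k2
  have := smul_nonneg (show (0:ℝ) ≤ 4 by norm_num) hAQ
  positivity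

/-- A soft union of projections: `A = 1 - (1 + cT)⁻¹` is dominated by `c T`, and almost
dominates every projection below `T`. The latter holds because inversion is operator antitone and
`(1 + cL)⁻¹ = (1 - L) + (1 + c)⁻¹ L`. -/
lemma soft_union {T : Matrix n n ℂ} (hT : 0 ≤ T) {c : ℝ} (hc : 0 < c) :
    ∃ A : Matrix n n ℂ, 0 ≤ A ∧ A ≤ 1 ∧ A ≤ c • T ∧
      ∀ L, IsProj L → L ≤ T → 1 - A ≤ (1 - L) + (1 + c)⁻¹ • 1 := by
  have hE : IsSelfAdjoint T := herm_of_nonneg hT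
  have s0 : ∀ x ∈ spectrum ℝ T, 0 ≤ x := fun x hx => spectrum_nonneg_of_nonneg hT hx
  set Z := cfc (fun x : ℝ => (1 + c * x)⁻¹) T with hZ
  have hZh : Zᴴ = Z := (IsSelfAdjoint.cfc : IsSelfAdjoint Z)
  have hZ1 : Z * (1 + c • T) = 1 := by
    have : 1 + c • T = cfc (fun x : ℝ => 1 + c * x) T := by
      rw [cfc_add _ _ _ (cont_spec _ _) (cont_spec _ _), cfc_const_mul _ _ _ (cont_spec _ _),
        cfc_id' ℝ T, cfc_const_one ℝ T]
    rw [this, hZ, ← cfc_mul _ _ _ (cont_spec _ _) (cont_spec _ _), ← cfc_const_one ℝ T]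
    refine cfc_congr fun x hx => ?_
    have := mul_nonneg hc.le (s0 x hx)
    exact inv_mul_cancel₀ (by positivity)
  have hZ2 : (1 + c • T) * Z = 1 := mul_eq_one_comm.1 hZ1
  have hZ0 : 0 ≤ Z := by
    rw [hZ, cfc_nonneg_iff _ _ (cont_spec _ _)]
    intro x hx
    have := mul_nonneg hc.le (s0 x hx)
    positivity
  refine ⟨1 - Z, ?_, ?_, ?_, ?_⟩
  · rw [sub_nonneg, hZ, ← cfc_const_one ℝ T, cfc_le_iff _ _ _ (cont_spec _ _) (cont_spec _ _)]
    intro x hx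
    have := mul_nonneg hc.le (s0 x hx)
    exact inv_le_one_of_one_le₀ (by linarith)
  · simpa using hZ0
  · have : c • T = cfc (fun x : ℝ => c * x) T := by
      rw [cfc_const_mul _ _ _ (cont_spec _ _), cfc_id' ℝ T]
    rw [this, hZ, ← cfc_const_one ℝ T, ← cfc_sub _ _ _ (cont_spec _ _) (cont_spec _ _),
      cfc_le_iff _ _ _ (cont_spec _ _) (cont_spec _ _)]
    intro x hx
    have h1 := mul_nonneg hc.le (s0 x hx)
    have h2 : (1 + c * x) * (1 + c * x)⁻¹ = 1 := mul_inv_cancel₀ (by positivity)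
    have h3 : 0 < (1 + c * x)⁻¹ := by positivity
    nlinarith [mul_nonneg h1 (mul_nonneg h1 h3.le)]
  · intro L hL hLT
    set B := (1 - L) + (1 + c)⁻¹ • L with hB
    have hc1 : (1 + c) * (1 + c)⁻¹ = 1 := mul_inv_cancel₀ (by positivity)
    have hBY : B * (1 + c • L) = 1 := by
      simp only [hB, mul_add, add_mul, sub_mul, mul_one, one_mul, smul_mul_assoc, mul_smul_comm,
        hL.2]
      have : (1 + c)⁻¹ • L + c • (1 + c)⁻¹ • L = L := by
        rw [smul_smul, ← add_smul, show (1 + c)⁻¹ + c * (1 + c)⁻¹ = 1 by linarith, one_smul]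
      calc _ = 1 - L + ((1 + c)⁻¹ • L + c • (1 + c)⁻¹ • L) := by module
        _ = 1 := by rw [this]; abel
    have hYB : (1 + c • L) * B = 1 := mul_eq_one_comm.1 hBY
    have hBh : Bᴴ = B := by simp [hB, hL.1]
    have key : B - Z = (B - Z)ᴴ * (1 + c • L) * (B - Z) + Zᴴ * (c • (T - L)) * Z := by
      simp only [conjTranspose_sub, hBh, hZh]
      have e1 : (B - Z) * (1 + c • L) * (B - Z) = B - Z - Z + Z * (1 + c • L) * Z := by
        simp only [sub_mul, mul_sub]
        rw [hBY, mul_assoc Z _ B, hYB]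
        simp; abel
      have e2 : Z * (c • (T - L)) * Z = Z - Z * (1 + c • L) * Z := by
        have : c • (T - L) = (1 + c • T) - (1 + c • L) := by rw [smul_sub]; abel
        rw [this, mul_sub, hZ1, sub_mul, one_mul]
      rw [e1, e2]; abel
    have hL0 := hL.nonneg
    have h1 : 0 ≤ B - Z := by
      rw [key]
      refine add_nonneg (conj_nonneg ?_ _) (conj_nonneg (smul_nonneg hc.le (sub_nonneg.2 hLT)) _)
      exact add_nonneg zero_le_one (smul_nonneg hc.le hL0)
    rw [sub_sub_cancel]
    refine (sub_nonneg.1 h1).trans ?_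
    rw [hB]
    gcongr
    exact hL.le_one

end ops2

/-! ### Tilting -/

section ops3
variable {H n : Type*} [Fintype n] [DecidableEq n] [Fintype H] [DecidableEq H]

/-- If `G` vanishes on the range of `L`, so does every `X` with `Xᴴ X ≤ G`. -/
lemma mul_zero_of_conj_le {G : Matrix n n ℂ} {X : Matrix H n ℂ} {L : Matrix n n ℂ}
    (hX : Xᴴ * X ≤ G) (hL : Lᴴ * G * L = 0) : X * L = 0 := by
  have h := conj_mono hX L
  rw [hL] at h
  have h2 : (X * L)ᴴ * (X * L) = 0 := by
    refine le_antisymm ?_ (self_nonneg _)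
    simpa [Matrix.mul_assoc] using h
  exact Matrix.conjTranspose_mul_self_eq_zero.1 h2

/-- A projection `L` that acts as two different tests on two tilted copies of a space. Here
`k0` and `e` are isometries with orthogonal ranges. On the copy embedded by the tilted isometry
`c k0 + s e` the projection `L` is dominated by `P`, on the copy embedded by `k0` it is
dominated by `P'`, and it annihilates everything orthogonal to both ranges. It rejects the tilted
copy only to the extent that one of `P`, `P'` rejects, up to the factor `1 / (1 - c)` coming from
the angle between the two copies.

`L` is the projection onto the kernel of `G = X† X + X'† X' + D`, where `X† X` and `X'† X'` are the
complements of `P` and `P'` transported to the two copies and `D` projects onto the orthogonal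
complement of both ranges. -/
lemma tilt (k0 e : Matrix n H ℂ) (h00 : k0ᴴ * k0 = 1) (hee : eᴴ * e = 1) (h0e : k0ᴴ * e = 0)
    {P P' : Matrix H H ℂ} (hP : IsProj P) (hP' : IsProj P') {c s : ℝ} (hc0 : 0 ≤ c) (hc1 : c < 1)
    (hcs : c * c + s * s = 1) :
    ∃ L : Matrix n n ℂ, IsProj L ∧ (c • k0 + s • e)ᴴ * L * (c • k0 + s • e) ≤ P ∧
      k0ᴴ * L * k0 ≤ P' ∧
      (1 - c) • ((c • k0 + s • e)ᴴ * (1 - L) * (c • k0 + s • e)) ≤ (1 - P) + (1 - P') ∧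
      ∀ e' : Matrix n H ℂ, k0ᴴ * e' = 0 → eᴴ * e' = 0 → L * e' = 0 := by
  have he0 : eᴴ * k0 = 0 := by
    have := congrArg conjTranspose h0e
    simpa using this
  set k : Matrix n H ℂ := c • k0 + s • e with hk
  have hkh : kᴴ = c • k0ᴴ + s • eᴴ := by simp [hk]
  have hkk : kᴴ * k = 1 := by
    rw [hkh, hk]
    simp only [Matrix.add_mul, Matrix.mul_add, Matrix.smul_mul, Matrix.mul_smul, h00, hee, h0e,
      he0, smul_zero, add_zero, zero_add, smul_smul, ← add_smul, hcs, one_smul]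
  have h0k : k0ᴴ * k = c • 1 := by
    rw [hk]; simp [Matrix.mul_add, h00, h0e]
  have hk0 : kᴴ * k0 = c • 1 := by
    rw [hkh]; simp [Matrix.add_mul, h00, he0]
  have hek : eᴴ * k = s • 1 := by
    rw [hk]; simp [Matrix.mul_add, hee, he0]
  clear_value k
  set W := 1 - P with hW
  set W' := 1 - P' with hW'
  have pW : IsProj W := hP.compl
  have pW' : IsProj W' := hP'.compl
  set X := W * kᴴ with hX
  set X' := W' * k0ᴴ with hX'
  set D : Matrix n n ℂ := 1 - k0 * k0ᴴ - e * eᴴ with hD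
  have hXh : Xᴴ = k * W := by simp [hX, pW.1]
  have hXh' : X'ᴴ = k0 * W' := by simp [hX', pW'.1]
  have hDh : Dᴴ = D := by simp [hD]
  have hDk0 : D * k0 = 0 := by
    simp [hD, Matrix.sub_mul, Matrix.mul_assoc, h00, he0]
  have hDe : D * e = 0 := by
    simp [hD, Matrix.sub_mul, Matrix.mul_assoc, hee, h0e]
  have hDk : D * k = 0 := by simp [hk, Matrix.mul_add, hDk0, hDe]
  have hkD : kᴴ * D = 0 := by
    have := congrArg conjTranspose hDk
    simpa [hDh] using this
  have hk0D : k0ᴴ * D = 0 := by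
    have := congrArg conjTranspose hDk0
    simpa [hDh] using this
  have hDD : D * D = D := by
    conv_lhs => enter [2]; rw [hD]
    rw [Matrix.mul_sub, Matrix.mul_sub, ← Matrix.mul_assoc, ← Matrix.mul_assoc, hDk0, hDe]
    simp
  have hD0 : 0 ≤ D := by
    have := self_nonneg D
    rwa [hDh, hDD] at this
  set G := Xᴴ * X + X'ᴴ * X' + D with hG
  have hA0 := self_nonneg X
  have hB0 := self_nonneg X'
  have hG0 : 0 ≤ G := by positivity
  -- products of the building blocks
  have xx : X * Xᴴ = W := by
    rw [hXh, hX, Matrix.mul_assoc, ← Matrix.mul_assoc kᴴ, hkk, Matrix.one_mul, pW.2]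
  have xx' : X' * X'ᴴ = W' := by
    rw [hXh', hX', Matrix.mul_assoc, ← Matrix.mul_assoc k0ᴴ, h00, Matrix.one_mul, pW'.2]
  have xy : X * X'ᴴ = c • (W * W') := by
    rw [hXh', hX, Matrix.mul_assoc, ← Matrix.mul_assoc kᴴ, hk0]; simp
  have yx : X' * Xᴴ = c • (W' * W) := by
    rw [hXh, hX', Matrix.mul_assoc, ← Matrix.mul_assoc k0ᴴ, h0k]; simp
  have XD : X * D = 0 := by rw [hX, Matrix.mul_assoc, hkD]; simp
  have XD' : X' * D = 0 := by rw [hX', Matrix.mul_assoc, hk0D]; simp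
  have DX : D * Xᴴ = 0 := by rw [hXh, ← Matrix.mul_assoc, hDk]; simp
  have DX' : D * X'ᴴ = 0 := by rw [hXh', ← Matrix.mul_assoc, hDk0]; simp
  have WX : W * X = X := by rw [hX, ← Matrix.mul_assoc, pW.2]
  have WX' : W' * X' = X' := by rw [hX', ← Matrix.mul_assoc, pW'.2]
  have XW : Xᴴ * W = Xᴴ := by rw [hXh, Matrix.mul_assoc, pW.2]
  have XW' : X'ᴴ * W' = X'ᴴ := by rw [hXh', Matrix.mul_assoc, pW'.2]
  have a1 : Xᴴ * X * (Xᴴ * X) = Xᴴ * X := by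
    rw [Matrix.mul_assoc, ← Matrix.mul_assoc X, xx, WX]
  have a2 : X'ᴴ * X' * (X'ᴴ * X') = X'ᴴ * X' := by
    rw [Matrix.mul_assoc, ← Matrix.mul_assoc X', xx', WX']
  have a3 : Xᴴ * X * (X'ᴴ * X') = c • (Xᴴ * X') := by
    rw [Matrix.mul_assoc, ← Matrix.mul_assoc X, xy, Matrix.smul_mul, Matrix.mul_smul,
      Matrix.mul_assoc W, WX', ← Matrix.mul_assoc, XW]
  have a4 : X'ᴴ * X' * (Xᴴ * X) = c • (X'ᴴ * X) := by
    rw [Matrix.mul_assoc, ← Matrix.mul_assoc X', yx, Matrix.smul_mul, Matrix.mul_smul,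
      Matrix.mul_assoc W', WX, ← Matrix.mul_assoc, XW']
  have a5 : Xᴴ * X * D = 0 := by rw [Matrix.mul_assoc, XD]; simp
  have a6 : X'ᴴ * X' * D = 0 := by rw [Matrix.mul_assoc, XD']; simp
  have a7 : D * (Xᴴ * X) = 0 := by rw [← Matrix.mul_assoc, DX]; simp
  have a8 : D * (X'ᴴ * X') = 0 := by rw [← Matrix.mul_assoc, DX']; simp
  -- the cross terms of `G * G` complete a square, which leaves a gap of `1 - c` above zero
  have gap : (1 - c) • G ≤ G * G := by
    have e1 : G * G = (1 - c) • G + c • ((X + X')ᴴ * (X + X')) + c • D := by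
      rw [hG]
      simp only [Matrix.mul_add, Matrix.add_mul, a1, a2, a3, a4, a5, a6, a7, a8, hDD,
        conjTranspose_add]
      module
    rw [e1, add_assoc]
    exact le_add_of_nonneg_right
      (add_nonneg (smul_nonneg hc0 (self_nonneg _)) (smul_nonneg hc0 hD0))
  obtain ⟨F, pF, hFG, hF⟩ := range_proj hG0 (sub_pos.2 hc1) gap
  have pL := pF.compl
  have hLG : (1 - F)ᴴ * G * (1 - F) = 0 := by
    rw [pL.1, Matrix.sub_mul 1 F G, hF]; simp
  have z1 : X * (1 - F) = 0 :=
    mul_zero_of_conj_le (by rw [hG, add_assoc]; exact le_add_of_nonneg_right (add_nonneg hB0 hD0)) hLG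
  have z2 : X' * (1 - F) = 0 :=
    mul_zero_of_conj_le (by
      rw [hG, add_right_comm]; exact le_add_of_nonneg_left (add_nonneg hA0 hD0)) hLG
  have z3 : D * (1 - F) = 0 :=
    mul_zero_of_conj_le (by rw [hDh, hDD, hG]; exact le_add_of_nonneg_left (add_nonneg hA0 hB0)) hLG
  have z3' : (1 - F) * D = 0 := by
    have := congrArg conjTranspose z3
    simpa [hDh, pF.1] using this
  have sand : ∀ (x : Matrix n H ℂ) (R V : Matrix H H ℂ), IsProj R → V = 1 - R → xᴴ * x = 1 →
      V * xᴴ * (1 - F) = 0 → xᴴ * (1 - F) * x ≤ R := by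
    intro x R V hR hV hx h
    rw [hV, Matrix.sub_mul, Matrix.sub_mul, sub_eq_zero, Matrix.one_mul] at h
    have h' : (1 - F) * x = (1 - F) * (x * R) := by
      have := congrArg conjTranspose h
      simpa [pF.1, hR.1] using this
    have e1 : xᴴ * (1 - F) * x = (x * R)ᴴ * (1 - F) * (x * R) := by
      rw [h, Matrix.mul_assoc, h']; simp [hR.1, Matrix.mul_assoc]
    rw [e1]
    refine (conj_mono pL.le_one _).trans (le_of_eq ?_)
    rw [Matrix.mul_one, conjTranspose_mul, hR.1, Matrix.mul_assoc, ← Matrix.mul_assoc xᴴ, hx,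
      Matrix.one_mul, hR.2]
  refine ⟨1 - F, pL, sand k P W hP hW hkk z1, sand k0 P' W' hP' hW' h00 z2, ?_, ?_⟩
  · rw [sub_sub_cancel]
    have := conj_mono hFG k
    rw [Matrix.mul_smul, Matrix.smul_mul] at this
    refine this.trans ?_
    have hXk : X * k = W := by rw [hX, Matrix.mul_assoc, hkk, Matrix.mul_one]
    have hXk' : X' * k = c • W' := by
      rw [hX', Matrix.mul_assoc, h0k, Matrix.mul_smul, Matrix.mul_one]
    have e1 : kᴴ * G * k = W + (c * c) • W' := by
      have : kᴴ * G * k = (X * k)ᴴ * (X * k) + (X' * k)ᴴ * (X' * k) + kᴴ * D * k := by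
        rw [hG]
        simp only [Matrix.mul_add, Matrix.add_mul, conjTranspose_mul, Matrix.mul_assoc]
      rw [this, hXk, hXk', hkD, Matrix.zero_mul, add_zero, pW.1, pW.2, conjTranspose_smul, pW'.1,
        star_trivial, Matrix.smul_mul, Matrix.mul_smul, pW'.2, smul_smul]
    rw [e1]
    gcongr
    have : (c * c) • W' ≤ (1:ℝ) • W' := by
      apply smul_le_smul_of_nonneg_right _ pW'.nonneg
      nlinarith
    simpa using this
  · intro e' h1 h2
    have : D * e' = e' := by
      simp [hD, Matrix.sub_mul, Matrix.mul_assoc, h1, h2]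
    rw [← this, ← Matrix.mul_assoc, z3', Matrix.zero_mul]

/-- The isometry `H → H ⊗ ℂ^κ`, `h ↦ h ⊗ |x⟩`. -/
def emb (H : Type*) {κ : Type*} [DecidableEq H] [DecidableEq κ] (x : κ) : Matrix (H × κ) H ℂ :=
  Matrix.of fun p h => if p = (h, x) then 1 else 0

lemma emb_mul {κ : Type*} [Fintype κ] [DecidableEq κ] (x y : κ) :
    (emb H x : Matrix (H × κ) H ℂ)ᴴ * emb H y = if x = y then 1 else 0 := by
  ext h h'
  simp only [emb, Matrix.mul_apply, conjTranspose_apply, of_apply]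
  rw [Finset.sum_eq_single (h, x)]
  · by_cases hxy : x = y
    · subst hxy; simp [Matrix.one_apply]
    · simp [hxy]
  · intro b _ hb
    simp [hb]
  · simp

/-- The tilted isometry `h ↦ h ⊗ (√(1-t) |none⟩ + √t |some i⟩)`; `none` is the blank label. -/
def tk (H : Type*) [DecidableEq H] {I : Type*} [DecidableEq I] (t : ℝ) (i : I) :
    Matrix (H × Option I) H ℂ :=
  √(1 - t) • emb H (none : Option I) + √t • emb H (some i)

/-- The projection `L` tests states tilted towards the label `i0` with `P true` and states tilted
towards any other label with `P false`. -/
lemma tilt_label {I : Type*} [Fintype I] [DecidableEq I] {t : ℝ} (ht0 : 0 < t) (ht1 : t < 1)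
    (i0 : I) {P : Bool → Matrix H H ℂ} (hP : ∀ b, IsProj (P b)) :
    ∃ L : Matrix (H × Option I) (H × Option I) ℂ, IsProj L ∧
      (∀ i, (tk H t i)ᴴ * L * tk H t i ≤ P (decide (i = i0))) ∧
      (tk H t i0)ᴴ * (1 - L) * tk H t i0 ≤ (2 / t) • ∑ b, (1 - P b) := by
  have hc0 := Real.sqrt_nonneg (1 - t)
  have hcc : √(1 - t) * √(1 - t) = 1 - t := Real.mul_self_sqrt (by linarith)
  have hss : √t * √t = t := Real.mul_self_sqrt ht0.le
  have hc1 : √(1 - t) < 1 := by nlinarith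
  have hcs : √(1 - t) * √(1 - t) + √t * √t = 1 := by rw [hcc, hss]; ring
  obtain ⟨L, pL, h1, h2, h3, h4⟩ := tilt (emb H (none : Option I) : Matrix (H × Option I) H ℂ) (emb H (some i0))
    (by simp [emb_mul]) (by simp [emb_mul]) (by simp [emb_mul]) (hP true) (hP false) hc0 hc1 hcs
  refine ⟨L, pL, fun i => ?_, ?_⟩
  · by_cases hi : i = i0
    · subst hi; simpa [tk] using h1
    · have z := h4 (emb H (some i)) (by simp [emb_mul]) (by simp [emb_mul, Ne.symm hi])
      have z' : (emb H (some i) : Matrix (H × Option I) H ℂ)ᴴ * L = 0 := by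
        have := congrArg conjTranspose z
        simpa [pL.1] using this
      have e1 : (tk H t i)ᴴ * L * tk H t i =
          (1 - t) • ((emb H (none : Option I) : Matrix (H × Option I) H ℂ)ᴴ * L * emb H (none : Option I)) := by
        simp only [tk, conjTranspose_add, conjTranspose_smul, star_trivial, Matrix.add_mul,
          Matrix.mul_add, Matrix.smul_mul, Matrix.mul_smul, z', Matrix.mul_assoc _ L, z,
          Matrix.mul_zero, smul_zero, add_zero, smul_smul, hcc]
      rw [e1]
      simp only [hi, decide_false]
      refine le_trans ?_ h2
      have hh := conj_nonneg pL.nonneg (emb H (none : Option I) : Matrix (H × Option I) H ℂ)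
      have := smul_le_smul_of_nonneg_right (show 1 - t ≤ 1 by linarith) hh
      simpa using this
  · have hk : t / 2 ≤ 1 - √(1 - t) := by nlinarith
    have h0 : 0 ≤ (tk H t i0)ᴴ * (1 - L) * tk H t i0 := conj_nonneg pL.compl.nonneg _
    have h5 : (t / 2) • ((tk H t i0)ᴴ * (1 - L) * tk H t i0) ≤ ∑ b, (1 - P b) :=
      (smul_le_smul_of_nonneg_right hk h0).trans (by rw [Fintype.sum_bool]; exact h3)
    have := smul_le_smul_of_nonneg_left h5 (show 0 ≤ 2 / t by positivity)
    rwa [smul_smul, show 2 / t * (t / 2) = 1 by field_simp, one_smul] at this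

lemma tk_mul {I : Type*} [Fintype I] [DecidableEq I] {t : ℝ} (ht0 : 0 < t) (ht1 : t < 1) (i : I) :
    (tk H t i : Matrix (H × Option I) H ℂ)ᴴ * tk H t i = 1 := by
  have hcc : √(1 - t) * √(1 - t) = 1 - t := Real.mul_self_sqrt (by linarith)
  have hss : √t * √t = t := Real.mul_self_sqrt ht0.le
  simp [tk, Matrix.add_mul, Matrix.mul_add, emb_mul, smul_smul, hcc, hss, ← add_smul]

lemma emb_tk {I : Type*} [Fintype I] [DecidableEq I] (t : ℝ) (i : I) :
    (emb H (none : Option I) : Matrix (H × Option I) H ℂ)ᴴ * tk H t i = √(1 - t) • 1 := by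
  simp [tk, Matrix.mul_add, emb_mul]

lemma tk_emb {I : Type*} [Fintype I] [DecidableEq I] (t : ℝ) (i : I) :
    (tk H t i)ᴴ * (emb H (none : Option I) : Matrix (H × Option I) H ℂ) = √(1 - t) • 1 := by
  simp [tk, Matrix.add_mul, emb_mul]

/-- The isometry tilted by `t` towards the label `i`, and then by `t` towards the label `j`. -/
def tkk (H : Type*) {I J : Type*} [Fintype H] [DecidableEq H] [Fintype I] [DecidableEq I] [DecidableEq J]
    (t : ℝ) (i : I) (j : J) : Matrix ((H × Option I) × Option J) H ℂ :=
  tk (H × Option I) t j * tk H t i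

/-- The untilted isometry, for which both labels are blank. -/
def base (H I J : Type*) [Fintype H] [DecidableEq H] [Fintype I] [DecidableEq I] [DecidableEq J] :
    Matrix ((H × Option I) × Option J) H ℂ :=
  emb (H × Option I) (none : Option J) * emb H (none : Option I)

lemma tkk_mul {I J : Type*} [Fintype I] [DecidableEq I] [Fintype J] [DecidableEq J] {t : ℝ}
    (ht0 : 0 < t) (ht1 : t < 1) (i : I) (j : J) :
    (tkk H t i j : Matrix ((H × Option I) × Option J) H ℂ)ᴴ * tkk H t i j = 1 := by
  rw [tkk, conjTranspose_mul, Matrix.mul_assoc, ← Matrix.mul_assoc (tk (H × Option I) t j)ᴴ, tk_mul ht0 ht1,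
    Matrix.one_mul, tk_mul ht0 ht1]

lemma base_mul {I J : Type*} [Fintype I] [DecidableEq I] [Fintype J] [DecidableEq J] :
    (base H I J : Matrix ((H × Option I) × Option J) H ℂ)ᴴ * base H I J = 1 := by
  rw [base, conjTranspose_mul, Matrix.mul_assoc, ← Matrix.mul_assoc (emb (H × Option I) (none : Option J))ᴴ, emb_mul]
  simp [emb_mul]

lemma base_tkk_dist {I J : Type*} [Fintype I] [DecidableEq I] [Fintype J] [DecidableEq J] {t : ℝ}
    (ht0 : 0 < t) (ht1 : t < 1) (i : I) (j : J) :
    (base H I J - tkk H t i j : Matrix ((H × Option I) × Option J) H ℂ)ᴴ * (base H I J - tkk H t i j) =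
      (2 * t) • 1 := by
  have hcc : √(1 - t) * √(1 - t) = 1 - t := Real.mul_self_sqrt (by linarith)
  have e1 : (base H I J : Matrix ((H × Option I) × Option J) H ℂ)ᴴ * tkk H t i j = (1 - t) • 1 := by
    rw [base, tkk, conjTranspose_mul, Matrix.mul_assoc, ← Matrix.mul_assoc (emb (H × Option I) (none : Option J))ᴴ, emb_tk]
    simp [emb_tk, smul_smul, hcc]
  have e2 : (tkk H t i j : Matrix ((H × Option I) × Option J) H ℂ)ᴴ * base H I J = (1 - t) • 1 := by
    rw [base, tkk, conjTranspose_mul, Matrix.mul_assoc, ← Matrix.mul_assoc (tk (H × Option I) t j)ᴴ, tk_emb]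
    simp [tk_emb, smul_smul, hcc]
  rw [conjTranspose_sub, Matrix.sub_mul, Matrix.mul_sub, Matrix.mul_sub, base_mul, e1, e2,
    tkk_mul ht0 ht1]
  module

/-- The two-label version of `tilt_label`: a single projection applies the one of four tests that
corresponds to which of the two labels are correct. It is obtained by tilting twice. -/
lemma tilt_two {I J : Type*} [Fintype I] [DecidableEq I] [Fintype J] [DecidableEq J] {t : ℝ}
    (ht0 : 0 < t) (ht1 : t < 1) (i0 : I) (j0 : J) {P : Bool → Bool → Matrix H H ℂ}
    (hP : ∀ b b', IsProj (P b b')) :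
    ∃ L : Matrix ((H × Option I) × Option J) ((H × Option I) × Option J) ℂ, IsProj L ∧
      (∀ i j, (tkk H t i j)ᴴ * L * tkk H t i j ≤ P (decide (i = i0)) (decide (j = j0))) ∧
      (tkk H t i0 j0)ᴴ * (1 - L) * tkk H t i0 j0 ≤ (4 / t ^ 2) • ∑ b, ∑ b', (1 - P b b') := by
  choose M pM hM1 hM2 using fun b' => tilt_label ht0 ht1 i0 (P := fun b => P b b') (fun b => hP b b')
  obtain ⟨L, pL, hL1, hL2⟩ := tilt_label ht0 ht1 j0 pM
  have assoc : ∀ (Z : Matrix ((H × Option I) × Option J) ((H × Option I) × Option J) ℂ) (i : I) (j : J),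
      (tkk H t i j)ᴴ * Z * tkk H t i j = (tk H t i)ᴴ * ((tk (H × Option I) t j)ᴴ * Z * tk (H × Option I) t j) * tk H t i := by
    intro Z i j
    simp only [tkk, conjTranspose_mul, Matrix.mul_assoc]
  refine ⟨L, pL, fun i j => ?_, ?_⟩
  · rw [assoc]
    exact (conj_mono (hL1 j) _).trans (hM1 _ i)
  · rw [assoc]
    refine (conj_mono hL2 _).trans ?_
    rw [Matrix.mul_smul, Matrix.smul_mul, Matrix.mul_sum, Matrix.sum_mul]
    have h := Finset.sum_le_sum fun b' (_ : b' ∈ Finset.univ) => hM2 b'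
    refine (smul_le_smul_of_nonneg_left h (show 0 ≤ 2 / t by positivity)).trans (le_of_eq ?_)
    rw [← Finset.smul_sum, smul_smul, Finset.sum_comm]
    congr 1
    field_simp; norm_num

end ops3

/-! ### The decoder of one receiver -/

section ops4
variable {H n : Type*} [Fintype n] [DecidableEq n] [Fintype H] [DecidableEq H]

/-- The parallelogram inequality for the quadratic form of `M`: replacing an isometry by a nearby
one costs a factor two and twice the squared distance. -/
lemma conj_near {M : Matrix n n ℂ} (h0 : 0 ≤ M) (h1 : M ≤ 1) (B K : Matrix n H ℂ) :
    Bᴴ * M * B ≤ (2:ℝ) • (Kᴴ * M * K) + (2:ℝ) • ((B - K)ᴴ * (B - K)) := by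
  have e : (2:ℝ) • (Kᴴ * M * K) + (2:ℝ) • ((B - K)ᴴ * M * (B - K)) - Bᴴ * M * B =
      (B - (2:ℝ) • K)ᴴ * M * (B - (2:ℝ) • K) := by
    simp only [conjTranspose_sub, conjTranspose_smul, star_trivial, Matrix.sub_mul, Matrix.mul_sub,
      Matrix.smul_mul, Matrix.mul_smul]
    module
  have h2 := conj_nonneg h0 (B - (2:ℝ) • K)
  rw [← e, sub_nonneg] at h2
  refine h2.trans ?_
  gcongr
  simpa using conj_mono h1 (B - K)

/-- A measurement for `(i, k)` built from four families of tests. The first Boolean index of `E`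
tells whether the candidate's own cloud index is the true one, the second whether the
interfering cloud index is. The bound holds for every `j`, so `j` may be chosen as the
true interfering index. The regularisation `t • 1` in `S` makes it invertible. -/
lemma decoder {I Kt J : Type*} [Fintype I] [DecidableEq I] [Fintype Kt] [DecidableEq Kt]
    [Fintype J] [DecidableEq J] {t : ℝ} (ht0 : 0 < t) (ht1 : t < 1)
    (E : Bool → Bool → I → Kt → J → Matrix H H ℂ)
    (h0 : ∀ b b' i k j, 0 ≤ E b b' i k j) (h1 : ∀ b b' i k j, E b b' i k j ≤ 1) :
    ∃ D : I → Kt → Matrix H H ℂ, (∀ i k, 0 ≤ D i k) ∧ ∑ i, ∑ k, D i k ≤ 1 ∧ ∀ i k j,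
      1 - D i k ≤ (32 / t ^ 2) • ∑ b, ∑ b', (1 - E b b' i k j) +
        (16 / t) • ∑ i', ∑ k', (if (i', k') = (i, k) then 0 else
          ∑ j', E (decide (i = i')) (decide (j = j')) i' k' j') + (16 * t) • 1 := by
  choose P pP hP1 hP2 using fun b b' i k j => round_exists (h0 b b' i k j) (h1 b b' i k j)
  choose L pL hL1 hL2 using fun i k j =>
    tilt_two ht0 ht1 i j (P := fun b b' => P b b' i k j) (fun b b' => pP b b' i k j)
  have hT : ∀ i k, 0 ≤ ∑ j, L i k j := fun i k => Finset.sum_nonneg fun j _ => (pL i k j).nonneg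
  -- `c = 1 / t` balances the loss `(1 + c)⁻¹ ≤ t` against the factor `c` in front of the union
  choose A hA0 hA1 hAT hAL using fun i k => soft_union (hT i k) (c := 1 / t) (by positivity)
  set S := ∑ i, ∑ k, A i k + t • (1 : Matrix ((H × Option I) × Option J) _ ℂ) with hS
  have hsum : 0 ≤ ∑ i, ∑ k, A i k :=
    Finset.sum_nonneg fun i _ => Finset.sum_nonneg fun k _ => hA0 i k
  have ht1' : 0 ≤ t • (1 : Matrix ((H × Option I) × Option J) ((H × Option I) × Option J) ℂ) :=
    smul_nonneg ht0.le zero_le_one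
  obtain ⟨R, hRh, hRSR, hR⟩ := hayashi_nagaoka ht0 (S := S) (le_add_of_nonneg_left hsum)
  have hAS : ∀ i k, A i k ≤ S := by
    intro i k
    refine le_trans ?_ (le_add_of_nonneg_right ht1')
    refine (Finset.single_le_sum (f := fun k => A i k) (fun k _ => hA0 i k)
      (Finset.mem_univ k)).trans ?_
    exact Finset.single_le_sum (f := fun i => ∑ k, A i k)
      (fun i _ => Finset.sum_nonneg fun k _ => hA0 i k) (Finset.mem_univ i)
  have conjR : ∀ {X Y : Matrix ((H × Option I) × Option J) ((H × Option I) × Option J) ℂ},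
      X ≤ Y → R * X * R ≤ R * Y * R := by
    intro X Y h
    have := conj_mono h R
    rwa [hRh] at this
  have nR : ∀ i k, 0 ≤ R * A i k * R := fun i k => by simpa using conjR (hA0 i k)
  refine ⟨fun i k => (base H I J)ᴴ * (R * A i k * R) * base H I J,
    fun i k => conj_nonneg (nR i k) _, ?_, fun i k j => ?_⟩
  · have e : ∑ i, ∑ k, (base H I J)ᴴ * (R * A i k * R) * base H I J =
        (base H I J)ᴴ * (R * (∑ i, ∑ k, A i k) * R) * base H I J := by
      simp only [Matrix.mul_sum, Matrix.sum_mul]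
    rw [e]
    have h2 : R * (∑ i, ∑ k, A i k) * R ≤ 1 := by
      rw [← hRSR]; exact conjR (le_add_of_nonneg_right ht1')
    simpa [base_mul] using conj_mono h2 (base H I J)
  · set M := 1 - R * A i k * R with hM
    have hM0 : 0 ≤ M := by
      rw [hM, sub_nonneg, ← hRSR]; exact conjR (hAS i k)
    have hM1 : M ≤ 1 := by
      rw [hM]; exact sub_le_self _ (nR i k)
    have e0 : 1 - (base H I J)ᴴ * (R * A i k * R) * base H I J =
        (base H I J)ᴴ * M * base H I J := by
      rw [hM, Matrix.mul_sub, Matrix.sub_mul, Matrix.mul_one, base_mul]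
    rw [e0]
    set K := tkk H t i j with hK
    have hKK : Kᴴ * K = 1 := tkk_mul ht0 ht1 i j
    refine (conj_near hM0 hM1 (base H I J) K).trans ?_
    rw [base_tkk_dist ht0 ht1]
    have c1 : Kᴴ * M * K ≤
        (2:ℝ) • (Kᴴ * (1 - A i k) * K) + (4:ℝ) • (Kᴴ * (S - A i k) * K) := by
      have := conj_mono (hR _ (hA0 i k) (hA1 i k) (hAS i k)) K
      simpa only [Matrix.mul_add, Matrix.add_mul, Matrix.mul_smul, Matrix.smul_mul] using this
    have c2 : Kᴴ * (1 - A i k) * K ≤ (8 / t ^ 2) • ∑ b, ∑ b', (1 - E b b' i k j) + t • 1 := by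
      have hle : L i k j ≤ ∑ j, L i k j :=
        Finset.single_le_sum (f := fun j => L i k j) (fun j _ => (pL i k j).nonneg)
          (Finset.mem_univ j)
      have := conj_mono (hAL i k _ (pL i k j) hle) K
      rw [Matrix.mul_add, Matrix.add_mul, Matrix.mul_smul, Matrix.smul_mul, Matrix.mul_one,
        hKK] at this
      refine this.trans (add_le_add ((hL2 i k j).trans ?_) ?_)
      · have : ∑ b, ∑ b', (1 - P b b' i k j) ≤ (2:ℝ) • ∑ b, ∑ b', (1 - E b b' i k j) := by
          simp only [Finset.smul_sum]
          exact Finset.sum_le_sum fun b _ => Finset.sum_le_sum fun b' _ => hP2 b b' i k j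
        refine (smul_le_smul_of_nonneg_left this (show 0 ≤ 4 / t ^ 2 by positivity)).trans_eq ?_
        rw [smul_smul]; congr 1; ring
      · apply smul_le_smul_of_nonneg_right _ zero_le_one
        rw [inv_le_comm₀ (by positivity) ht0, ← one_div]
        linarith
    have c3 : Kᴴ * (S - A i k) * K ≤ (2 / t) • ∑ i', ∑ k', (if (i', k') = (i, k) then 0 else
          ∑ j', E (decide (i = i')) (decide (j = j')) i' k' j') + t • 1 := by
      have e1 : S - A i k = ∑ i', ∑ k', (if (i', k') = (i, k) then 0 else A i' k') + t • 1 := by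
        have : ∑ i', ∑ k', (if (i', k') = (i, k) then A i' k' else 0) = A i k := by
          rw [Finset.sum_eq_single i, Finset.sum_eq_single k]
          · simp
          · intro b _ hb; simp [hb]
          · simp
          · intro b _ hb; simp [hb]
          · simp
        rw [hS, add_sub_right_comm]
        congr 1
        rw [sub_eq_iff_eq_add]
        conv_rhs => enter [2]; rw [← this]
        rw [← Finset.sum_add_distrib]
        refine Finset.sum_congr rfl fun i' _ => ?_
        rw [← Finset.sum_add_distrib]
        refine Finset.sum_congr rfl fun k' _ => ?_
        split_ifs <;> simp
      rw [e1, Matrix.mul_add, Matrix.add_mul, Matrix.mul_smul, Matrix.smul_mul, Matrix.mul_one,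
        hKK]
      gcongr
      simp only [Matrix.mul_sum, Matrix.sum_mul, Finset.smul_sum]
      refine Finset.sum_le_sum fun i' _ => Finset.sum_le_sum fun k' _ => ?_
      split_ifs with h
      · simp
      · refine (conj_mono (hAT i' k') K).trans ?_
        rw [Matrix.mul_smul, Matrix.smul_mul, Matrix.mul_sum, Matrix.sum_mul]
        have : ∑ j', Kᴴ * L i' k' j' * K ≤
            (2:ℝ) • ∑ j', E (decide (i = i')) (decide (j = j')) i' k' j' := by
          rw [Finset.smul_sum]
          exact Finset.sum_le_sum fun j' _ => (hL1 i' k' j' i j).trans (hP1 _ _ _ _ _)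
        refine (smul_le_smul_of_nonneg_left this (show 0 ≤ 1 / t by positivity)).trans_eq ?_
        rw [smul_smul]; congr 1; ring
    generalize ∑ b, ∑ b', (1 - E b b' i k j) = Z1 at *
    generalize ∑ i', ∑ k', (if (i', k') = (i, k) then 0 else
          ∑ j', E (decide (i = i')) (decide (j = j')) i' k' j') = Z2 at *
    calc (2:ℝ) • (Kᴴ * M * K) + (2:ℝ) • ((2 * t) • (1 : Matrix H H ℂ))
        ≤ (2:ℝ) • ((2:ℝ) • ((8 / t ^ 2) • Z1 + t • 1) + (4:ℝ) • ((2 / t) • Z2 + t • 1)) +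
          (2:ℝ) • ((2 * t) • (1 : Matrix H H ℂ)) := by
          have := c1.trans (add_le_add (smul_le_smul_of_nonneg_left c2 (show (0:ℝ) ≤ 2 by norm_num))
            (smul_le_smul_of_nonneg_left c3 (show (0:ℝ) ≤ 4 by norm_num)))
          gcongr
      _ = _ := by
          module

end ops4

/-! ### Random superposition codebooks -/

section iid
variable {ι S : Type*} [Fintype ι] [DecidableEq ι] [Fintype S] [DecidableEq S]

lemma sum_prod_fun (φ : ι → S → ℝ) : ∑ f : ι → S, ∏ i, φ i (f i) = ∏ i, ∑ s, φ i s := by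
  rw [Finset.prod_univ_sum, Fintype.piFinset_univ]

lemma iid_one {P : S → ℝ} (hP : ∑ s, P s = 1) (i : ι) (g : S → ℝ) :
    ∑ f : ι → S, (∏ k, P (f k)) * g (f i) = ∑ s, P s * g s := by
  have h := sum_prod_fun (ι := ι) (fun k s => P s * if k = i then g s else 1)
  have e : ∀ f : ι → S, ∏ k, (P (f k) * if k = i then g (f k) else 1) =
      (∏ k, P (f k)) * g (f i) := by
    intro f; rw [Finset.prod_mul_distrib, Finset.prod_ite_eq']; simp
  simp only [e] at h
  rw [h, Finset.prod_eq_single i]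
  · simp
  · intro k _ hk; simp [hk, hP]
  · simp

lemma iid_total {P : S → ℝ} (hP : ∑ s, P s = 1) : ∑ f : ι → S, ∏ k, P (f k) = 1 := by
  rw [sum_prod_fun (ι := ι) (fun _ s => P s)]; simp [hP]

lemma iid_two {P : S → ℝ} (hP : ∑ s, P s = 1) {i i' : ι} (hi : i ≠ i') (g : S → S → ℝ) :
    ∑ f : ι → S, (∏ k, P (f k)) * g (f i) (f i') = ∑ s, ∑ s', P s * P s' * g s s' := by
  have key : ∀ s0, ∑ f : ι → S, (∏ k, P (f k)) * ((if f i = s0 then 1 else 0) * g s0 (f i')) =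
      P s0 * ∑ s', P s' * g s0 s' := by
    intro s0
    have h := sum_prod_fun (ι := ι) (fun k s => P s * ((if k = i then (if s = s0 then 1 else 0)
      else 1) * if k = i' then g s0 s else 1))
    have e : ∀ f : ι → S, ∏ k, (P (f k) * ((if k = i then (if f k = s0 then 1 else 0)
      else 1) * if k = i' then g s0 (f k) else 1)) =
        (∏ k, P (f k)) * ((if f i = s0 then 1 else 0) * g s0 (f i')) := by
      intro f
      rw [Finset.prod_mul_distrib, Finset.prod_mul_distrib, Finset.prod_ite_eq',
        Finset.prod_ite_eq']; simp
    simp only [e] at h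
    rw [h, ← Finset.mul_prod_erase _ _ (Finset.mem_univ i),
      ← Finset.mul_prod_erase _ _ (Finset.mem_erase.2 ⟨hi.symm, Finset.mem_univ i'⟩),
      Finset.prod_eq_one]
    · simp [hi, hi.symm]
    · intro k hk
      simp only [Finset.mem_erase, Finset.mem_univ, and_true] at hk
      simp [hk.1, hk.2, hP]
  have e : ∀ f : ι → S, (∏ k, P (f k)) * g (f i) (f i') =
      ∑ s0, (∏ k, P (f k)) * ((if f i = s0 then 1 else 0) * g s0 (f i')) := by
    intro f; rw [← Finset.mul_sum]; simp
  simp only [e]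
  rw [Finset.sum_comm]
  refine Finset.sum_congr rfl fun s0 _ => ?_
  rw [key, Finset.mul_sum]
  exact Finset.sum_congr rfl fun s' _ => by ring

end iid

/-- Factorization of a joint law as marginal times conditional law. Where the marginal of `u`
vanishes, any distribution may serve as the conditional law; the marginal of `x` is used. -/
lemma kernel_exists {U X : Type*} [Fintype U] [Fintype X] {p : U × X → ℝ} (h0 : ∀ s, 0 ≤ p s)
    (h1 : ∑ s, p s = 1) : ∃ c : U → X → ℝ, (∀ u x, 0 ≤ c u x) ∧ (∀ u, ∑ x, c u x = 1) ∧
      ∀ u x, (∑ x', p (u, x')) * c u x = p (u, x) := by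
  set pU := fun u => ∑ x', p (u, x') with hpU
  have hz : ∀ u x, pU u = 0 → p (u, x) = 0 := fun u x h =>
    (Finset.sum_eq_zero_iff_of_nonneg fun x _ => h0 (u, x)).1 h x (Finset.mem_univ _)
  refine ⟨fun u x => if pU u = 0 then ∑ v, p (v, x) else p (u, x) / pU u, ?_, ?_, ?_⟩
  · intro u x
    dsimp only
    split_ifs
    · exact Finset.sum_nonneg fun v _ => h0 _
    · exact div_nonneg (h0 _) (Finset.sum_nonneg fun v _ => h0 _)
  · intro u
    dsimp only
    split_ifs with h
    · rw [Finset.sum_comm, ← Fintype.sum_prod_type]; exact h1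
    · rw [← Finset.sum_div]; exact div_self h
  · intro u x
    change pU u * (if pU u = 0 then ∑ v, p (v, x) else p (u, x) / pU u) = _
    split_ifs with h
    · rw [h, hz u x h, zero_mul]
    · field_simp

/-- The law of a random superposition codebook with `M` clouds of `K` satellites: the clouds are
independent, and given its centre `u` a cloud consists of independent satellites with law
`p(· | u)`. Listed are the laws of one codeword, of two satellites of one cloud, and of two
satellites of different clouds. -/
lemma codebook_exists {U X : Type*} [Fintype U] [Fintype X] [DecidableEq U] [DecidableEq X]
    {p : U × X → ℝ} (h0 : ∀ s, 0 ≤ p s) (h1 : ∑ s, p s = 1) (M K : ℕ) :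
    ∃ w : (Fin M → U × (Fin K → X)) → ℝ, (∀ a, 0 ≤ w a) ∧ ∑ a, w a = 1 ∧
      (∀ i k (g : U → X → ℝ), ∑ a, w a * g (a i).1 ((a i).2 k) = ∑ s : U × X, p s * g s.1 s.2) ∧
      (∀ i k k', k ≠ k' → ∀ g : U → X → X → ℝ,
        ∑ a, w a * g (a i).1 ((a i).2 k) ((a i).2 k') =
          ∑ s : U × X, ∑ x', p s * (p (s.1, x') / ∑ x, p (s.1, x)) * g s.1 s.2 x') ∧
      (∀ i i' k k', i ≠ i' → ∀ g : U → X → U → X → ℝ,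
        ∑ a, w a * g (a i).1 ((a i).2 k) (a i').1 ((a i').2 k') =
          ∑ s : U × X, ∑ s' : U × X, p s * p s' * g s.1 s.2 s'.1 s'.2) := by
  obtain ⟨c, c0, c1, c2⟩ := kernel_exists h0 h1
  set pU := fun u => ∑ x', p (u, x') with hpU
  have hU : ∑ u, pU u = 1 := by rw [← h1, Fintype.sum_prod_type]
  have hU0 : ∀ u, 0 ≤ pU u := fun u => Finset.sum_nonneg fun v _ => h0 _
  set P : U × (Fin K → X) → ℝ := fun s => pU s.1 * ∏ k, c s.1 (s.2 k) with hP
  have hP1 : ∑ s, P s = 1 := by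
    rw [Fintype.sum_prod_type]
    simp only [hP, ← Finset.mul_sum, iid_total (c1 _), mul_one, hU]
  have one : ∀ k (g : U → X → ℝ), ∑ s, P s * g s.1 (s.2 k) = ∑ s : U × X, p s * g s.1 s.2 := by
    intro k g
    rw [Fintype.sum_prod_type, Fintype.sum_prod_type]
    refine Finset.sum_congr rfl fun u _ => ?_
    have := iid_one (c1 u) k (fun x => g u x)
    simp only [hP, mul_assoc, ← Finset.mul_sum, this]
    rw [Finset.mul_sum]
    exact Finset.sum_congr rfl fun x _ => by rw [← mul_assoc]; congr 1; exact c2 u x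
  have two : ∀ k k' (_ : k ≠ k') (g : U → X → X → ℝ), ∑ s, P s * g s.1 (s.2 k) (s.2 k') =
      ∑ s : U × X, ∑ x', p s * (p (s.1, x') / ∑ x, p (s.1, x)) * g s.1 s.2 x' := by
    intro k k' hk g
    rw [Fintype.sum_prod_type, Fintype.sum_prod_type]
    refine Finset.sum_congr rfl fun u _ => ?_
    have := iid_two (c1 u) hk (fun x x' => g u x x')
    simp only [hP, mul_assoc, ← Finset.mul_sum, this]
    simp only [Finset.mul_sum]
    refine Finset.sum_congr rfl fun x _ => Finset.sum_congr rfl fun x' _ => ?_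
    rw [← c2 u x, ← c2 u x']
    change pU u * (c u x * (c u x' * g u x x')) =
      pU u * c u x * (pU u * c u x' / pU u * g u x x')
    by_cases h : pU u = 0
    · simp [h]
    · field_simp
  refine ⟨fun a => ∏ i, P (a i), fun a => Finset.prod_nonneg fun i _ =>
    mul_nonneg (hU0 _) (Finset.prod_nonneg fun k _ => c0 _ _), iid_total hP1, ?_, ?_, ?_⟩
  · intro i k g
    rw [← one k g]
    exact iid_one hP1 i (fun s => g s.1 (s.2 k))
  · intro i k k' hk g
    rw [← two k k' hk g]
    exact iid_one hP1 i (fun s => g s.1 (s.2 k) (s.2 k'))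
  · intro i i' k k' hi g
    have := iid_two hP1 hi (fun s s' => g s.1 (s.2 k) s'.1 (s'.2 k'))
    simp only at this ⊢
    rw [this]
    have e1 : ∀ s : U × (Fin K → X), ∑ s' : U × (Fin K → X), P s * P s' * g s.1 (s.2 k) s'.1 (s'.2 k') =
        P s * ∑ s' : U × X, p s' * g s.1 (s.2 k) s'.1 s'.2 := by
      intro s
      rw [← one k' (fun u x => g s.1 (s.2 k) u x), Finset.mul_sum]
      exact Finset.sum_congr rfl fun s' _ => by ring
    simp only [e1]
    rw [one k (fun u x => ∑ s' : U × X, p s' * g u x s'.1 s'.2)]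
    refine Finset.sum_congr rfl fun s _ => ?_
    rw [Finset.mul_sum]
    exact Finset.sum_congr rfl fun s' _ => by ring

/-! ### Average error of one receiver -/

section pair
variable {n : Type*} [Fintype n] [DecidableEq n]

/-- The probability `Re Tr(E ω)` that the effect `E` accepts `ω`, as a linear function of `E`. -/
def acc (ω : Matrix n n ℂ) : Matrix n n ℂ →ₗ[ℝ] ℝ where
  toFun E := ((E * ω).trace).re
  map_add' A B := by simp [Matrix.add_mul]
  map_smul' c A := by simp

lemma acc_apply (ω E : Matrix n n ℂ) : acc ω E = ((E * ω).trace).re := rfl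

lemma acc_nonneg {ω E : Matrix n n ℂ} (hω : 0 ≤ ω) (hE : 0 ≤ E) : 0 ≤ acc ω E := by
  obtain ⟨B, hB⟩ := CStarAlgebra.nonneg_iff_eq_star_mul_self.1 hω
  have hB' : ω = Bᴴ * B := hB
  have h := conj_nonneg hE Bᴴ
  rw [conjTranspose_conjTranspose, Matrix.nonneg_iff_posSemidef] at h
  have h2 := h.trace_nonneg
  rw [acc_apply, hB', ← Matrix.mul_assoc, Matrix.trace_mul_comm, ← Matrix.mul_assoc]
  exact (Complex.le_def.1 h2).1

lemma acc_mono {ω A B : Matrix n n ℂ} (hω : 0 ≤ ω) (h : A ≤ B) : acc ω A ≤ acc ω B := by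
  have := acc_nonneg hω (sub_nonneg.2 h)
  rw [map_sub] at this
  linarith

end pair

/-- `w` is a law on codebooks of `M` clouds with `K` satellites whose one- and two-codeword
marginals are those of a random superposition code with letter distribution `p`. The quotient in
`same` is the conditional probability of `x'` given the cloud centre; if the centre has probability
zero it is `0`, but then the factor `p s` vanishes as well. -/
structure IsLaw {U X : Type*} [Fintype U] [Fintype X] (p : U × X → ℝ) {M K : ℕ}
    (w : (Fin M → U × (Fin K → X)) → ℝ) : Prop where
  nonneg : ∀ a, 0 ≤ w a
  total : ∑ a, w a = 1
  one : ∀ i k (g : U → X → ℝ), ∑ a, w a * g (a i).1 ((a i).2 k) = ∑ s : U × X, p s * g s.1 s.2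
  same : ∀ i k k', k ≠ k' → ∀ g : U → X → X → ℝ,
    ∑ a, w a * g (a i).1 ((a i).2 k) ((a i).2 k') =
      ∑ s : U × X, ∑ x', p s * (p (s.1, x') / ∑ x, p (s.1, x)) * g s.1 s.2 x'
  diff : ∀ i i' k k', i ≠ i' → ∀ g : U → X → U → X → ℝ,
    ∑ a, w a * g (a i).1 ((a i).2 k) (a i').1 ((a i').2 k') =
      ∑ s : U × X, ∑ s' : U × X, p s * p s' * g s.1 s.2 s'.1 s'.2

/-- The error of one receiver averaged over the codebooks, for fixed messages. The sender of
interest has `M` clouds of `K` satellites and the interferer has `J` clouds of `L` satellites.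
`hA` bounds the missed detections of the four tests; `hB11`, `hB01`, `hB10`, `hB00` bound the total
false alarm of each type, where the first digit refers to the receiver's own cloud index and the second
to the interfering one. -/
lemma receiver {Q U X V Y n : Type*} [Fintype Q] [Fintype U] [Fintype X] [Fintype V] [Fintype Y]
    [DecidableEq U] [DecidableEq X] [DecidableEq V] [DecidableEq Y] [Fintype n] [DecidableEq n]
    {t : ℝ} (ht0 : 0 < t) (ht1 : t < 1)
    {pQ : Q → ℝ} (pQ0 : ∀ q, 0 ≤ pQ q) (pQ1 : ∑ q, pQ q = 1)
    {p1 : Q → U × X → ℝ} {p2 : Q → V × Y → ℝ}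
    {ω : X → Y → Matrix n n ℂ} (hω : ∀ x y, 0 ≤ ω x y) (hω1 : ∀ x y, acc (ω x y) 1 = 1)
    {M K J L : ℕ} (hM : 0 < M) (hK : 0 < K) (hJ : 0 < J)
    {w1 : Q → (Fin M → U × (Fin K → X)) → ℝ} {w2 : Q → (Fin J → V × (Fin L → Y)) → ℝ}
    (hw1 : ∀ q, IsLaw (p1 q) (w1 q)) (hw2 : ∀ q, IsLaw (p2 q) (w2 q))
    (T : Bool → Bool → Q → U → X → V → Matrix n n ℂ)
    (hT0 : ∀ b b' q u x v, 0 ≤ T b b' q u x v) (hT1 : ∀ b b' q u x v, T b b' q u x v ≤ 1)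
    (hA : ∀ b b', ∑ q, pQ q * ∑ s, p1 q s * ∑ r, p2 q r *
      acc (ω s.2 r.2) (1 - T b b' q s.1 s.2 r.1) ≤ t ^ 3)
    (hB11 : K * ∑ q, pQ q * ∑ s, ∑ x', p1 q s * (p1 q (s.1, x') / ∑ x, p1 q (s.1, x)) *
      ∑ r, p2 q r * acc (ω s.2 r.2) (T true true q s.1 x' r.1) ≤ t ^ 3)
    (hB01 : (M * K) * ∑ q, pQ q * ∑ s, ∑ s', p1 q s * p1 q s' *
      ∑ r, p2 q r * acc (ω s.2 r.2) (T false true q s'.1 s'.2 r.1) ≤ t ^ 3)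
    (hB10 : (K * J) * ∑ q, pQ q * ∑ s, ∑ x', p1 q s * (p1 q (s.1, x') / ∑ x, p1 q (s.1, x)) *
      ∑ r, ∑ r', p2 q r * p2 q r' * acc (ω s.2 r.2) (T true false q s.1 x' r'.1) ≤ t ^ 3)
    (hB00 : (M * K * J) * ∑ q, pQ q * ∑ s, ∑ s', p1 q s * p1 q s' *
      ∑ r, ∑ r', p2 q r * p2 q r' * acc (ω s.2 r.2) (T false false q s'.1 s'.2 r'.1) ≤ t ^ 3) :
    ∃ D : Q → (Fin M → U × (Fin K → X)) → (Fin J → V × (Fin L → Y)) →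
        Fin M → Fin K → Matrix n n ℂ,
      (∀ q a b i k, 0 ≤ D q a b i k) ∧ (∀ q a b, ∑ i, ∑ k, D q a b i k ≤ 1) ∧
      ∀ i k j l, ∑ q, pQ q * ∑ a, w1 q a * ∑ b, w2 q b *
        acc (ω ((a i).2 k) ((b j).2 l)) (1 - D q a b i k) ≤ 208 * t := by
  choose D hD0 hD1 hD using fun (q : Q) (a : Fin M → U × (Fin K → X))
    (b : Fin J → V × (Fin L → Y)) => decoder (I := Fin M) (Kt := Fin K) (J := Fin J) ht0 ht1
      (fun β β' i k j => T β β' q (a i).1 ((a i).2 k) (b j).1)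
      (fun _ _ _ _ _ => hT0 _ _ _ _ _ _) (fun _ _ _ _ _ => hT1 _ _ _ _ _ _)
  refine ⟨D, hD0, hD1, fun i k j l => ?_⟩
  -- the average over codebooks as a linear functional
  let Ex : (Q → (Fin M → U × (Fin K → X)) → (Fin J → V × (Fin L → Y)) → ℝ) →ₗ[ℝ] ℝ :=
    { toFun := fun F => ∑ q, pQ q * ∑ a, w1 q a * ∑ b, w2 q b * F q a b
      map_add' := by
        intro F G
        simp only [Pi.add_apply, mul_add, Finset.sum_add_distrib]
      map_smul' := by
        intro c F
        simp only [Pi.smul_apply, smul_eq_mul, Finset.mul_sum, RingHom.id_apply]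
        refine Finset.sum_congr rfl fun q _ => Finset.sum_congr rfl fun a _ =>
          Finset.sum_congr rfl fun b _ => by ring }
  have Ex_def : ∀ F, Ex F = ∑ q, pQ q * ∑ a, w1 q a * ∑ b, w2 q b * F q a b := fun _ => rfl
  have Ex_mono : ∀ F G, (∀ q a b, F q a b ≤ G q a b) → Ex F ≤ Ex G := by
    intro F G h
    rw [Ex_def, Ex_def]
    exact Finset.sum_le_sum fun q _ => mul_le_mul_of_nonneg_left
      (Finset.sum_le_sum fun a _ => mul_le_mul_of_nonneg_left
        (Finset.sum_le_sum fun b _ => mul_le_mul_of_nonneg_left (h q a b) ((hw2 q).nonneg b))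
        ((hw1 q).nonneg a)) (pQ0 q)
  have Ex_const : ∀ c : ℝ, Ex (fun _ _ _ => c) = c := by
    intro c
    rw [Ex_def]
    simp only [← Finset.sum_mul, (hw2 _).total, (hw1 _).total, pQ1, one_mul]
  -- probability of a missed detection
  have miss : ∀ β β', Ex (fun q a b => acc (ω ((a i).2 k) ((b j).2 l))
      (1 - T β β' q (a i).1 ((a i).2 k) (b j).1)) ≤ t ^ 3 := by
    intro β β'
    refine le_of_eq_of_le ?_ (hA β β')
    rw [Ex_def]
    refine Finset.sum_congr rfl fun q _ => ?_
    congr 1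
    rw [← (hw1 q).one i k (fun u x => ∑ r : V × Y, p2 q r *
      acc (ω x r.2) (1 - T β β' q u x r.1))]
    refine Finset.sum_congr rfl fun a _ => ?_
    rw [(hw2 q).one j l (fun v y => acc (ω ((a i).2 k) y) (1 - T β β' q (a i).1 ((a i).2 k) v))]
  have Mpos : (0:ℝ) < M := by exact_mod_cast hM
  have Kpos : (0:ℝ) < K := by exact_mod_cast hK
  have Jpos : (0:ℝ) < J := by exact_mod_cast hJ
  -- probability of a false alarm
  have alarm : ∀ i' k' j', (i', k') ≠ (i, k) →
      Ex (fun q a b => acc (ω ((a i).2 k) ((b j).2 l))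
        (T (decide (i = i')) (decide (j = j')) q (a i').1 ((a i').2 k') (b j').1)) ≤
      (if i = i' then (if j = j' then t ^ 3 / K else 0) + t ^ 3 / (K * J) else 0) +
      (if j = j' then t ^ 3 / (M * K) else 0) + t ^ 3 / (M * K * J) := by
    intro i' k' j' hne
    have n1 : 0 ≤ t ^ 3 / K := by positivity
    have n2 : 0 ≤ t ^ 3 / (K * J) := by positivity
    have n3 : 0 ≤ t ^ 3 / (M * K) := by positivity
    have n4 : 0 ≤ t ^ 3 / (M * K * J) := by positivity
    by_cases hi : i = i' <;> by_cases hj : j = j'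
    · subst hi hj
      have hk : k ≠ k' := fun h => hne (by rw [h])
      simp only [decide_true, if_true]
      refine le_trans ?_ (by linarith : t ^ 3 / K ≤ _)
      rw [le_div_iff₀' Kpos]
      refine le_of_eq_of_le ?_ hB11
      rw [Ex_def]
      congr 1
      refine Finset.sum_congr rfl fun q _ => ?_
      congr 1
      rw [← (hw1 q).same i k k' hk (fun u x x' => ∑ r : V × Y, p2 q r *
        acc (ω x r.2) (T true true q u x' r.1))]
      refine Finset.sum_congr rfl fun a _ => ?_
      rw [(hw2 q).one j l (fun v y => acc (ω ((a i).2 k) y)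
        (T true true q (a i).1 ((a i).2 k') v))]
    · subst hi
      have hk : k ≠ k' := fun h => hne (by rw [h])
      simp only [decide_true, if_true, hj, if_false, decide_false, zero_add, add_zero]
      refine le_trans ?_ (by linarith : t ^ 3 / (K * J) ≤ _)
      rw [le_div_iff₀' (by positivity)]
      refine le_of_eq_of_le ?_ hB10
      rw [Ex_def]
      congr 1
      refine Finset.sum_congr rfl fun q _ => ?_
      congr 1
      rw [← (hw1 q).same i k k' hk (fun u x x' => ∑ r : V × Y, ∑ r' : V × Y, p2 q r * p2 q r' *
        acc (ω x r.2) (T true false q u x' r'.1))]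
      refine Finset.sum_congr rfl fun a _ => ?_
      rw [(hw2 q).diff j j' l l hj (fun v y v' y' => acc (ω ((a i).2 k) y)
        (T true false q (a i).1 ((a i).2 k') v'))]
    · subst hj
      simp only [decide_true, if_true, hi, if_false, decide_false, zero_add]
      refine le_trans ?_ (by linarith : t ^ 3 / (M * K) ≤ _)
      rw [le_div_iff₀' (by positivity)]
      refine le_of_eq_of_le ?_ hB01
      rw [Ex_def]
      congr 1
      refine Finset.sum_congr rfl fun q _ => ?_
      congr 1
      rw [← (hw1 q).diff i i' k k' hi (fun u x u' x' => ∑ r : V × Y, p2 q r *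
        acc (ω x r.2) (T false true q u' x' r.1))]
      refine Finset.sum_congr rfl fun a _ => ?_
      rw [(hw2 q).one j l (fun v y => acc (ω ((a i).2 k) y)
        (T false true q (a i').1 ((a i').2 k') v))]
    · simp only [hj, if_false, hi, decide_false, zero_add]
      rw [le_div_iff₀' (by positivity)]
      refine le_of_eq_of_le ?_ hB00
      rw [Ex_def]
      congr 1
      refine Finset.sum_congr rfl fun q _ => ?_
      congr 1
      rw [← (hw1 q).diff i i' k k' hi (fun u x u' x' => ∑ r : V × Y, ∑ r' : V × Y,
        p2 q r * p2 q r' * acc (ω x r.2) (T false false q u' x' r'.1))]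
      refine Finset.sum_congr rfl fun a _ => ?_
      rw [(hw2 q).diff j j' l l hj (fun v y v' y' => acc (ω ((a i).2 k) y)
        (T false false q (a i').1 ((a i').2 k') v'))]
  have bound : Ex (fun q a b => acc (ω ((a i).2 k) ((b j).2 l)) (1 - D q a b i k)) ≤
      Ex ((32 / t ^ 2) • ∑ β, ∑ β', (fun q a b => acc (ω ((a i).2 k) ((b j).2 l))
          (1 - T β β' q (a i).1 ((a i).2 k) (b j).1)) +
        (16 / t) • ∑ i', ∑ k', (if (i', k') = (i, k) then 0 else
          ∑ j', fun q a b => acc (ω ((a i).2 k) ((b j).2 l))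
            (T (decide (i = i')) (decide (j = j')) q (a i').1 ((a i').2 k') (b j').1)) +
        fun _ _ _ => 16 * t) := by
    refine Ex_mono _ _ fun q a b => ?_
    -- the decoder bound is applied at the true index `j` of the interfering cloud
    refine (acc_mono (hω _ _) (hD q a b i k j)).trans (le_of_eq ?_)
    simp only [map_add, map_smul, map_sum, Pi.add_apply, Pi.smul_apply, Finset.sum_apply, hω1,
      smul_eq_mul, mul_one]
    congr 3
    refine Finset.sum_congr rfl fun i' _ => Finset.sum_congr rfl fun k' _ => ?_
    split_ifs <;> simp
  refine bound.trans ?_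
  rw [map_add, map_add, map_smul, map_smul, map_sum, map_sum, Ex_const]
  simp only [map_sum, smul_eq_mul]
  have s1 : ∑ β, ∑ β', Ex (fun q a b => acc (ω ((a i).2 k) ((b j).2 l))
      (1 - T β β' q (a i).1 ((a i).2 k) (b j).1)) ≤ 4 * t ^ 3 := by
    refine (Finset.sum_le_sum fun β _ => Finset.sum_le_sum fun β' _ => miss β β').trans ?_
    simp; linarith
  have s2 : ∑ i', ∑ k', Ex (if (i', k') = (i, k) then 0 else
          ∑ j', fun q a b => acc (ω ((a i).2 k) ((b j).2 l))
            (T (decide (i = i')) (decide (j = j')) q (a i').1 ((a i').2 k') (b j').1))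
      ≤ 4 * t ^ 3 := by
    have : ∀ i' k', Ex (if (i', k') = (i, k) then 0 else
          ∑ j', fun q a b => acc (ω ((a i).2 k) ((b j).2 l))
            (T (decide (i = i')) (decide (j = j')) q (a i').1 ((a i').2 k') (b j').1)) ≤
        ∑ j', ((if i = i' then (if j = j' then t ^ 3 / K else 0) + t ^ 3 / (K * J) else 0) +
      (if j = j' then t ^ 3 / (M * K) else 0) + t ^ 3 / (M * K * J)) := by
      intro i' k'
      by_cases h : (i', k') = (i, k)
      · rw [if_pos h, map_zero]
        refine Finset.sum_nonneg fun j' _ => ?_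
        split_ifs <;> positivity
      · rw [if_neg h, map_sum]
        exact Finset.sum_le_sum fun j' _ => alarm i' k' j' h
    refine (Finset.sum_le_sum fun i' _ => Finset.sum_le_sum fun k' _ => this i' k').trans
      (le_of_eq ?_)
    simp only [Finset.sum_add_distrib, Finset.sum_const, Finset.card_univ, Fintype.card_fin,
      Finset.sum_ite_eq, Finset.mem_univ, if_true, nsmul_eq_mul, Finset.sum_ite_irrel,
      mul_ite, mul_zero]
    field_simp
    ring
  have m1 := mul_le_mul_of_nonneg_left s1 (show 0 ≤ 32 / t ^ 2 by positivity)
  have m2 := mul_le_mul_of_nonneg_left s2 (show 0 ≤ 16 / t by positivity)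
  have e1 : 32 / t ^ 2 * (4 * t ^ 3) = 128 * t := by field_simp; ring
  have e2 : 16 / t * (4 * t ^ 3) = 64 * t ^ 2 := by field_simp; ring
  nlinarith

/-! ### Tests from information quantities -/

section tests
variable {n : Type*} [Fintype n] [DecidableEq n]

lemma acc_smul_left (c : ℝ) (ω E : Matrix n n ℂ) : acc ((c : ℂ) • ω) E = c * acc ω E := by
  simp [acc_apply]

lemma acc_sum_left {ι : Type*} (s : Finset ι) (ω : ι → Matrix n n ℂ) (E : Matrix n n ℂ) :
    acc (∑ i ∈ s, ω i) E = ∑ i ∈ s, acc (ω i) E := by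
  simp [acc_apply, Matrix.mul_sum, Matrix.trace_sum]

/-- On a cq-state only the diagonal blocks of an effect matter. -/
lemma acc_cq {C : Type*} [Fintype C] [DecidableEq C] (σ : C → Matrix n n ℂ)
    (E : Matrix (C × n) (C × n) ℂ) :
    acc (cqState σ) E = ∑ c, acc (σ c) (E.submatrix (fun i => (c, i)) (fun i => (c, i))) := by
  simp only [acc_apply, Matrix.trace, Matrix.mul_apply, cqState, Fintype.sum_prod_type,
    Matrix.diag_apply, Matrix.of_apply, Matrix.submatrix_apply, Complex.re_sum]
  refine Finset.sum_congr rfl fun c _ => Finset.sum_congr rfl fun i _ => ?_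
  rw [Finset.sum_eq_single c]
  · simp
  · intro b _ hb
    simp [hb]
  · simp

/-- A rate bounded by a hypothesis testing relative entropy of cq-states yields a family of effects
indexed by the classical letter, with missed detection at most `ε` and total false alarm over `N`
candidates at most `ε`. The slack of `2` bits covers the fact that the supremum need not be attained. -/
lemma DH_test {C : Type*} [Fintype C] [DecidableEq C] {ε : ℝ} (hε : 0 < ε)
    {σ τ : C → Matrix n n ℂ} {r N : ℝ} (hN : 0 < N) (hr : r = Real.logb 2 N)
    (h : (r : EReal) ≤ DH ε (cqState σ) (cqState τ) - ((2 : ℝ) : EReal) -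
        ((Real.logb 2 (1 / ε) : ℝ) : EReal)) :
    ∃ E : C → Matrix n n ℂ, (∀ c, 0 ≤ E c) ∧ (∀ c, E c ≤ 1) ∧
      1 - ε ≤ ∑ c, acc (σ c) (E c) ∧ N * ∑ c, acc (τ c) (E c) ≤ ε := by
  have h1 : ((r + Real.logb 2 (1 / ε) + 2 : ℝ) : EReal) ≤ DH ε (cqState σ) (cqState τ) := by
    have a := EReal.add_le_of_le_sub h
    have b := EReal.add_le_of_le_sub a
    exact_mod_cast b
  have h2 : ((r + Real.logb 2 (1 / ε) : ℝ) : EReal) < DH ε (cqState σ) (cqState τ) :=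
    lt_of_lt_of_le (by exact_mod_cast (by linarith)) h1
  rw [DH, lt_sSup_iff] at h2
  obtain ⟨_, ⟨d, ⟨E, hE, hE1, hE2⟩, rfl⟩, hd⟩ := h2
  have hd' : r + Real.logb 2 (1 / ε) < d := EReal.coe_lt_coe_iff.1 hd
  have hsub : ∀ A : Matrix (C × n) (C × n) ℂ, A.PosSemidef → ∀ c,
      (A.submatrix (fun i => (c, i)) (fun i : n => (c, i))).PosSemidef :=
    fun A hA c => hA.submatrix _
  refine ⟨fun c => E.submatrix (fun i => (c, i)) (fun i => (c, i)), fun c => ?_, fun c => ?_, ?_, ?_⟩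
  · rw [Matrix.nonneg_iff_posSemidef]; exact hsub _ hE.1 c
  · rw [Matrix.le_iff]
    have := hsub _ hE.2 c
    have e : (1 : Matrix (C × n) (C × n) ℂ).submatrix (fun i : n => (c, i)) (fun i => (c, i)) = 1 :=
      Matrix.submatrix_one _ (fun a b h => (Prod.mk.inj h).2)
    rw [← e]
    exact this
  · rw [← acc_cq]; exact hE1
  · rw [← acc_cq]
    have e : (2:ℝ) ^ (-d) ≤ ε / N := by
      have : -d ≤ Real.logb 2 (ε / N) := by
        rw [Real.logb_div hε.ne' hN.ne', ← hr]
        rw [one_div, Real.logb_inv] at hd'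
        linarith
      calc (2:ℝ) ^ (-d) ≤ 2 ^ Real.logb 2 (ε / N) :=
            Real.rpow_le_rpow_of_exponent_le (by norm_num) this
        _ = ε / N := Real.rpow_logb (by norm_num) (by norm_num) (by positivity)
    have := (hE2.trans e)
    rw [le_div_iff₀' hN] at this
    exact this

end tests

/-! ### Average acceptance probabilities of the tests -/

section marg
variable {n : Type*} [Fintype n] [DecidableEq n]
variable {U X V Y : Type*} [Fintype U] [Fintype X] [Fintype V] [Fintype Y]
  (ω : X → Y → Matrix n n ℂ) (c : ℝ) (p : U × X → ℝ) (p' : V × Y → ℝ)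

/-! The `good` identities express acceptance by the true codeword, and the `bad` identities
acceptance by an independently drawn candidate, in terms of codebook averages. The suffix lists the
letters on which the test depends. -/

lemma good_uvx (E : U → V → X → Matrix n n ℂ) :
    ∑ u, ∑ v, ∑ x, acc (((c * p (u, x) : ℝ) : ℂ) • ∑ y, (p' (v, y) : ℂ) • ω x y) (E u v x) =
      c * ∑ s, p s * ∑ r, p' r * acc (ω s.2 r.2) (E s.1 r.1 s.2) := by
  simp only [acc_smul_left, acc_sum_left, Fintype.sum_prod_type, Finset.mul_sum]
  refine Finset.sum_congr rfl fun u _ => ?_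
  rw [Finset.sum_comm]
  simp only [mul_assoc]

lemma good_vx (E : V → X → Matrix n n ℂ) :
    ∑ v, ∑ x, acc (((c * ∑ u, p (u, x) : ℝ) : ℂ) • ∑ y, (p' (v, y) : ℂ) • ω x y) (E v x) =
      c * ∑ s, p s * ∑ r, p' r * acc (ω s.2 r.2) (E r.1 s.2) := by
  simp only [acc_smul_left, acc_sum_left, Fintype.sum_prod_type, Finset.mul_sum, Finset.sum_mul]
  simp only [← Fintype.sum_prod_type']
  refine Fintype.sum_equiv ⟨fun z => (z.2.2.2, z.2.1, z.1, z.2.2.1),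
    fun z => (z.2.2.1, z.2.1, z.2.2.2, z.1), fun _ => rfl, fun _ => rfl⟩ _ _ (fun z => ?_)
  dsimp
  ring

lemma good_uxv (E : U → X → V → Matrix n n ℂ) :
    ∑ u, ∑ x, ∑ v, acc (((c * p (u, x) : ℝ) : ℂ) • ∑ y, (p' (v, y) : ℂ) • ω x y) (E u x v) =
      c * ∑ s, p s * ∑ r, p' r * acc (ω s.2 r.2) (E s.1 s.2 r.1) := by
  rw [← good_uvx ω c p p' (fun u v x => E u x v)]
  exact Finset.sum_congr rfl fun u _ => Finset.sum_comm

lemma good_xv (E : X → V → Matrix n n ℂ) :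
    ∑ x, ∑ v, acc (((c * ∑ u, p (u, x) : ℝ) : ℂ) • ∑ y, (p' (v, y) : ℂ) • ω x y) (E x v) =
      c * ∑ s, p s * ∑ r, p' r * acc (ω s.2 r.2) (E s.2 r.1) := by
  rw [← good_vx ω c p p' (fun v x => E x v)]
  exact Finset.sum_comm

lemma bad_uvx (E : U → V → X → Matrix n n ℂ) :
    ∑ u, ∑ v, ∑ x, acc (((c * p (u, x) / ∑ x, p (u, x) : ℝ) : ℂ) •
        ∑ x, (p (u, x) : ℂ) • ∑ y, (p' (v, y) : ℂ) • ω x y) (E u v x) =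
      c * ∑ s, ∑ x', p s * (p (s.1, x') / ∑ x, p (s.1, x)) *
        ∑ r, p' r * acc (ω s.2 r.2) (E s.1 r.1 x') := by
  rw [Fintype.sum_prod_type, Finset.mul_sum]
  refine Finset.sum_congr rfl fun u _ => ?_
  dsimp only
  generalize ∑ x, p (u, x) = m
  simp only [acc_smul_left, acc_sum_left, Fintype.sum_prod_type, Finset.mul_sum]
  simp only [← Fintype.sum_prod_type']
  refine Fintype.sum_equiv ⟨fun z => (z.2.2.1, z.2.1, z.1, z.2.2.2),
    fun z => (z.2.2.1, z.2.1, z.1, z.2.2.2), fun _ => rfl, fun _ => rfl⟩ _ _ (fun z => ?_)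
  dsimp
  ring

lemma bad_vx (E : V → X → Matrix n n ℂ) :
    ∑ v, ∑ x, acc (((c * ∑ u, p (u, x) : ℝ) : ℂ) •
        ∑ x, ((∑ u, p (u, x) : ℝ) : ℂ) • ∑ y, (p' (v, y) : ℂ) • ω x y) (E v x) =
      c * ∑ s, ∑ s', p s * p s' * ∑ r, p' r * acc (ω s.2 r.2) (E r.1 s'.2) := by
  simp only [acc_smul_left, acc_sum_left, Fintype.sum_prod_type, Finset.mul_sum, Finset.sum_mul]
  simp only [← Fintype.sum_prod_type']
  refine Fintype.sum_equiv ⟨fun z => (z.2.2.2.2.1, z.2.2.1, z.2.2.2.2.2, z.2.1, z.1, z.2.2.2.1),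
    fun z => (z.2.2.2.2.1, z.2.2.2.1, z.2.1, z.2.2.2.2.2, z.1, z.2.2.1), fun _ => rfl, fun _ => rfl⟩ _ _ (fun z => ?_)
  dsimp
  ring

lemma bad_uxv (E : U → X → V → Matrix n n ℂ) :
    ∑ u, ∑ x, ∑ v, acc (((c * p (u, x) * (∑ y, p' (v, y)) / ∑ x, p (u, x) : ℝ) : ℂ) •
        ∑ x, ∑ v, (p (u, x) : ℂ) • ∑ y, (p' (v, y) : ℂ) • ω x y) (E u x v) =
      c * ∑ s, ∑ x', p s * (p (s.1, x') / ∑ x, p (s.1, x)) *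
        ∑ r, ∑ r', p' r * p' r' * acc (ω s.2 r.2) (E s.1 x' r'.1) := by
  rw [Fintype.sum_prod_type, Finset.mul_sum]
  refine Finset.sum_congr rfl fun u _ => ?_
  dsimp only
  generalize ∑ x, p (u, x) = m
  simp only [acc_smul_left, acc_sum_left, Fintype.sum_prod_type, Finset.mul_sum, Finset.sum_mul,
    Finset.sum_div]
  simp only [← Fintype.sum_prod_type']
  refine Fintype.sum_equiv ⟨fun z => (z.2.2.1, z.1, z.2.2.2.1, z.2.2.2.2.1, z.2.1, z.2.2.2.2.2),
    fun z => (z.2.1, z.2.2.2.2.1, z.1, z.2.2.1, z.2.2.2.1, z.2.2.2.2.2),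
    fun _ => rfl, fun _ => rfl⟩ _ _ (fun z => ?_)
  dsimp
  ring

lemma bad_xv (E : X → V → Matrix n n ℂ) :
    ∑ x, ∑ v, acc (((c * (∑ u, p (u, x)) * (∑ y, p' (v, y)) : ℝ) : ℂ) •
        ∑ x, ∑ v, ((∑ u, p (u, x) : ℝ) : ℂ) • ∑ y, (p' (v, y) : ℂ) • ω x y) (E x v) =
      c * ∑ s, ∑ s', p s * p s' *
        ∑ r, ∑ r', p' r * p' r' * acc (ω s.2 r.2) (E s'.2 r'.1) := by
  simp only [acc_smul_left, acc_sum_left, Fintype.sum_prod_type, Finset.mul_sum, Finset.sum_mul]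
  simp only [← Fintype.sum_prod_type']
  refine Fintype.sum_equiv ⟨fun z => (z.2.2.2.2.2.1, z.2.2.1, z.2.2.2.2.2.2.2, z.1, z.2.2.2.1, z.2.2.2.2.1, z.2.1, z.2.2.2.2.2.2.1),
    fun z => (z.2.2.2.1, z.2.2.2.2.2.2.1, z.2.1, z.2.2.2.2.1, z.2.2.2.2.2.1, z.1, z.2.2.2.2.2.2.2, z.2.2.1),
    fun _ => rfl, fun _ => rfl⟩ _ _ (fun z => ?_)
  dsimp
  ring
end marg

/-! ### One receiver in terms of information quantities -/

lemma miss_of_hit {Q U X V Y n : Type*} [Fintype Q] [Fintype U] [Fintype X] [Fintype V]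
    [Fintype Y] [Fintype n] [DecidableEq n] {pQ : Q → ℝ} (pQ1 : ∑ q, pQ q = 1)
    {p1 : Q → U × X → ℝ} {p2 : Q → V × Y → ℝ} (p11 : ∀ q, ∑ s, p1 q s = 1)
    (p21 : ∀ q, ∑ s, p2 q s = 1)
    {ω : X → Y → Matrix n n ℂ} (hω1 : ∀ x y, acc (ω x y) 1 = 1) {ε : ℝ}
    (E : Q → U → X → V → Matrix n n ℂ)
    (h : 1 - ε ≤ ∑ q, pQ q * ∑ s, p1 q s * ∑ r, p2 q r * acc (ω s.2 r.2) (E q s.1 s.2 r.1)) :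
    ∑ q, pQ q * ∑ s, p1 q s * ∑ r, p2 q r * acc (ω s.2 r.2) (1 - E q s.1 s.2 r.1) ≤ ε := by
  simp only [map_sub, hω1, mul_sub, mul_one, Finset.sum_sub_distrib, p21, p11, pQ1]
  linarith

/-- The average error of one receiver under rate conditions. `H1` supplies the test against wrong
satellites directly, since the order of its conditioning letters `U₁`, `U₂` is not symmetric under
exchange of the receivers; `H2`, `H3`, `H4` are the remaining three rate conditions. -/
lemma receiver_info {Q U X V Y n : Type*} [Fintype Q] [Fintype U] [Fintype X] [Fintype V]
    [Fintype Y] [DecidableEq Q]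
    [DecidableEq U] [DecidableEq X] [DecidableEq V] [DecidableEq Y] [Fintype n] [DecidableEq n]
    {t ε : ℝ} (ht0 : 0 < t) (ht1 : t < 1) (hε : t ^ 3 = ε)
    {pQ : Q → ℝ} (pQ0 : ∀ q, 0 ≤ pQ q) (pQ1 : ∑ q, pQ q = 1)
    {p1 : Q → U × X → ℝ} {p2 : Q → V × Y → ℝ} (p11 : ∀ q, ∑ s, p1 q s = 1)
    (p21 : ∀ q, ∑ s, p2 q s = 1)
    {ω : X → Y → Matrix n n ℂ} (hω : ∀ x y, 0 ≤ ω x y) (hω1 : ∀ x y, acc (ω x y) 1 = 1)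
    {M K J L : ℕ} (hM : 0 < M) (hK : 0 < K) (hJ : 0 < J)
    {w1 : Q → (Fin M → U × (Fin K → X)) → ℝ} {w2 : Q → (Fin J → V × (Fin L → Y)) → ℝ}
    (hw1 : ∀ q, IsLaw (p1 q) (w1 q)) (hw2 : ∀ q, IsLaw (p2 q) (w2 q))
    (H1 : ∃ E : Q → U → V → X → Matrix n n ℂ,
      (∀ q u v x, 0 ≤ E q u v x) ∧ (∀ q u v x, E q u v x ≤ 1) ∧
      1 - ε ≤ ∑ q, ∑ u, ∑ v, ∑ x, acc (((pQ q * p1 q (u, x) : ℝ) : ℂ) •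
        ∑ y, (p2 q (v, y) : ℂ) • ω x y) (E q u v x) ∧
      K * ∑ q, ∑ u, ∑ v, ∑ x, acc (((pQ q * p1 q (u, x) / ∑ x, p1 q (u, x) : ℝ) : ℂ) •
        ∑ x, (p1 q (u, x) : ℂ) • ∑ y, (p2 q (v, y) : ℂ) • ω x y) (E q u v x) ≤ ε)
    (H2 : ((Real.logb 2 M + Real.logb 2 K : ℝ) : EReal) ≤
      DH ε
        (cqState fun c : (Q × V) × X =>
          ((pQ c.1.1 * ∑ u, p1 c.1.1 (u, c.2) : ℝ) : ℂ) •
            ∑ y, (p2 c.1.1 (c.1.2, y) : ℂ) • ω c.2 y)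
        (cqState fun c : (Q × V) × X =>
          ((pQ c.1.1 * ∑ u, p1 c.1.1 (u, c.2) : ℝ) : ℂ) •
            ∑ x, ((∑ u, p1 c.1.1 (u, x) : ℝ) : ℂ) •
              ∑ y, (p2 c.1.1 (c.1.2, y) : ℂ) • ω x y) -
      ((2 : ℝ) : EReal) - ((Real.logb 2 (1 / ε) : ℝ) : EReal))
    (H3 : ((Real.logb 2 K + Real.logb 2 J : ℝ) : EReal) ≤
      DH ε
        (cqState fun c : (Q × U) × (X × V) =>
          ((pQ c.1.1 * p1 c.1.1 (c.1.2, c.2.1) : ℝ) : ℂ) •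
            ∑ y, (p2 c.1.1 (c.2.2, y) : ℂ) • ω c.2.1 y)
        (cqState fun c : (Q × U) × (X × V) =>
          ((pQ c.1.1 * p1 c.1.1 (c.1.2, c.2.1) * (∑ y, p2 c.1.1 (c.2.2, y)) /
              ∑ x, p1 c.1.1 (c.1.2, x) : ℝ) : ℂ) •
            ∑ x, ∑ v, (p1 c.1.1 (c.1.2, x) : ℂ) • ∑ y, (p2 c.1.1 (v, y) : ℂ) • ω x y) -
      ((2 : ℝ) : EReal) - ((Real.logb 2 (1 / ε) : ℝ) : EReal))
    (H4 : ((Real.logb 2 M + Real.logb 2 K + Real.logb 2 J : ℝ) : EReal) ≤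
      DH ε
        (cqState fun c : Q × (X × V) =>
          ((pQ c.1 * ∑ u, p1 c.1 (u, c.2.1) : ℝ) : ℂ) •
            ∑ y, (p2 c.1 (c.2.2, y) : ℂ) • ω c.2.1 y)
        (cqState fun c : Q × (X × V) =>
          ((pQ c.1 * (∑ u, p1 c.1 (u, c.2.1)) * (∑ y, p2 c.1 (c.2.2, y)) : ℝ) : ℂ) •
            ∑ x, ∑ v, ((∑ u, p1 c.1 (u, x) : ℝ) : ℂ) • ∑ y, (p2 c.1 (v, y) : ℂ) • ω x y) -
      ((2 : ℝ) : EReal) - ((Real.logb 2 (1 / ε) : ℝ) : EReal)) :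
    ∃ D : Q → (Fin M → U × (Fin K → X)) → (Fin J → V × (Fin L → Y)) →
        Fin M → Fin K → Matrix n n ℂ,
      (∀ q a b i k, 0 ≤ D q a b i k) ∧ (∀ q a b, ∑ i, ∑ k, D q a b i k ≤ 1) ∧
      ∀ i k j l, ∑ q, pQ q * ∑ a, w1 q a * ∑ b, w2 q b *
        acc (ω ((a i).2 k) ((b j).2 l)) (1 - D q a b i k) ≤ 208 * t := by
  have ε0 : 0 < ε := by rw [← hε]; positivity
  have Mpos : (0:ℝ) < M := by exact_mod_cast hM
  have Kpos : (0:ℝ) < K := by exact_mod_cast hK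
  have Jpos : (0:ℝ) < J := by exact_mod_cast hJ
  obtain ⟨E1, E10, E11, E1g, E1b⟩ := H1
  obtain ⟨E2, E20, E21, E2g, E2b⟩ := DH_test ε0 (N := M * K) (by positivity)
    (by rw [Real.logb_mul Mpos.ne' Kpos.ne']) H2
  obtain ⟨E3, E30, E31, E3g, E3b⟩ := DH_test ε0 (N := K * J) (by positivity)
    (by rw [Real.logb_mul Kpos.ne' Jpos.ne']) H3
  obtain ⟨E4, E40, E41, E4g, E4b⟩ := DH_test ε0 (N := M * K * J) (by positivity)
    (by rw [Real.logb_mul (by positivity) Jpos.ne', Real.logb_mul Mpos.ne' Kpos.ne']) H4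
  simp only [Fintype.sum_prod_type (α₁ := Q), Fintype.sum_prod_type (α₁ := Q × V),
    Fintype.sum_prod_type (α₁ := Q × U), Fintype.sum_prod_type (α₁ := X) (α₂ := V)]
    at E2g E2b E3g E3b E4g E4b
  rw [Finset.sum_congr rfl fun q _ => good_uvx ω (pQ q) (p1 q) (p2 q) (E1 q)] at E1g
  rw [Finset.sum_congr rfl fun q _ => bad_uvx ω (pQ q) (p1 q) (p2 q) (E1 q)] at E1b
  rw [Finset.sum_congr rfl fun q _ => good_vx ω (pQ q) (p1 q) (p2 q)
    (fun v x => E2 ((q, v), x))] at E2g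
  rw [Finset.sum_congr rfl fun q _ => bad_vx ω (pQ q) (p1 q) (p2 q)
    (fun v x => E2 ((q, v), x))] at E2b
  rw [Finset.sum_congr rfl fun q _ => good_uxv ω (pQ q) (p1 q) (p2 q)
    (fun u x v => E3 ((q, u), (x, v)))] at E3g
  rw [Finset.sum_congr rfl fun q _ => bad_uxv ω (pQ q) (p1 q) (p2 q)
    (fun u x v => E3 ((q, u), (x, v)))] at E3b
  rw [Finset.sum_congr rfl fun q _ => good_xv ω (pQ q) (p1 q) (p2 q)
    (fun x v => E4 (q, (x, v)))] at E4g
  rw [Finset.sum_congr rfl fun q _ => bad_xv ω (pQ q) (p1 q) (p2 q)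
    (fun x v => E4 (q, (x, v)))] at E4b
  let T : Bool → Bool → Q → U → X → V → Matrix n n ℂ := fun b b' q u x v =>
    match b, b' with
    | true, true => E1 q u v x
    | false, true => E2 ((q, v), x)
    | true, false => E3 ((q, u), (x, v))
    | false, false => E4 (q, (x, v))
  refine receiver ht0 ht1 pQ0 pQ1 hω hω1 hM hK hJ hw1 hw2 T ?_ ?_ ?_ ?_ ?_ ?_ ?_
  · rintro (_ | _) (_ | _) q u x v
    exacts [E40 _, E20 _, E30 _, E10 _ _ _ _]
  · rintro (_ | _) (_ | _) q u x v
    exacts [E41 _, E21 _, E31 _, E11 _ _ _ _]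
  · intro b b'
    rw [hε]
    refine miss_of_hit pQ1 p11 p21 hω1 (T b b') ?_
    match b, b' with
    | true, true => exact E1g
    | false, true => exact E2g
    | true, false => exact E3g
    | false, false => exact E4g
  · rw [hε]; exact E1b
  · rw [hε]; exact E2b
  · rw [hε]; exact E3b
  · rw [hε]; exact E4b

/-! ### Partial traces and the two-receiver code -/

lemma acc_trR {α β : Type*} [Fintype α] [Fintype β] [DecidableEq α] [DecidableEq β]
    (ρ : Matrix (α × β) (α × β) ℂ) (A : Matrix α α ℂ) :
    acc ρ (A ⊗ₖ (1 : Matrix β β ℂ)) = acc (trR ρ) A := by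
  simp only [acc_apply, Matrix.trace, Matrix.mul_apply, trR, Fintype.sum_prod_type,
    Matrix.diag_apply, Matrix.of_apply, Matrix.kroneckerMap_apply, Matrix.one_apply]
  congr 1
  refine Finset.sum_congr rfl fun i _ => ?_
  rw [Finset.sum_comm]
  refine Finset.sum_congr rfl fun i' _ => ?_
  rw [Finset.mul_sum]
  refine Finset.sum_congr rfl fun j _ => ?_
  simp

lemma acc_trL {α β : Type*} [Fintype α] [Fintype β] [DecidableEq α] [DecidableEq β]
    (ρ : Matrix (α × β) (α × β) ℂ) (B : Matrix β β ℂ) :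
    acc ρ ((1 : Matrix α α ℂ) ⊗ₖ B) = acc (trL ρ) B := by
  simp only [acc_apply, Matrix.trace, Matrix.mul_apply, trL, Fintype.sum_prod_type,
    Matrix.diag_apply, Matrix.of_apply, Matrix.kroneckerMap_apply, Matrix.one_apply]
  congr 1
  rw [Finset.sum_comm]
  refine Finset.sum_congr rfl fun j _ => ?_
  simp only [Finset.mul_sum]
  rw [Finset.sum_comm]
  simp only [ite_mul, one_mul, zero_mul]
  simp
  exact Finset.sum_comm

lemma trR_nonneg {α β : Type*} [Fintype α] [Fintype β]
    {ρ : Matrix (α × β) (α × β) ℂ} (h : ρ.PosSemidef) : 0 ≤ trR ρ := by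
  have e : trR ρ = ∑ b, ρ.submatrix (fun a => (a, b)) (fun a => (a, b)) := by
    ext i j; simp [trR, Matrix.sum_apply]
  rw [e]
  exact Finset.sum_nonneg fun b _ => (h.submatrix _).nonneg

lemma trL_nonneg {α β : Type*} [Fintype α] [Fintype β]
    {ρ : Matrix (α × β) (α × β) ℂ} (h : ρ.PosSemidef) : 0 ≤ trL ρ := by
  have e : trL ρ = ∑ a, ρ.submatrix (fun b => (a, b)) (fun b => (a, b)) := by
    ext i j; simp [trL, Matrix.sum_apply]
  rw [e]
  exact Finset.sum_nonneg fun b _ => (h.submatrix _).nonneg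

lemma acc_density {α : Type*} [Fintype α] [DecidableEq α] {ρ : Matrix α α ℂ}
    (h : IsDensity ρ) : acc ρ 1 = 1 := by
  simp [acc_apply, h.2]

/-- Union bound for the joint success of two local effects. -/
lemma acc_kron {α β : Type*} [Fintype α] [Fintype β] [DecidableEq α] [DecidableEq β]
    {ρ : Matrix (α × β) (α × β) ℂ} (h : IsDensity ρ) {A : Matrix α α ℂ} {B : Matrix β β ℂ}
    (hA : A ≤ 1) (hB : B ≤ 1) :
    1 - acc (trR ρ) (1 - A) - acc (trL ρ) (1 - B) ≤ acc ρ (A ⊗ₖ B) := by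
  have hp : 0 ≤ (1 - A) ⊗ₖ (1 - B) :=
    ((Matrix.le_iff.1 hA).kronecker (Matrix.le_iff.1 hB)).nonneg
  have := acc_nonneg h.1.nonneg hp
  have e : A ⊗ₖ B = 1 - (1 - A) ⊗ₖ (1 : Matrix β β ℂ) - (1 : Matrix α α ℂ) ⊗ₖ (1 - B)
      + (1 - A) ⊗ₖ (1 - B) := by
    ext ⟨i, j⟩ ⟨i', j'⟩
    by_cases hi : i = i' <;> by_cases hj : j = j' <;>
      simp [Matrix.kroneckerMap_apply, hi, hj] <;> ring
  rw [e, map_add (acc ρ), map_sub (acc ρ), map_sub (acc ρ), acc_trR, acc_trL, acc_density h]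
  linarith

lemma exists_le_of_avg {ι : Type*} [Fintype ι] {w f : ι → ℝ} (w0 : ∀ i, 0 ≤ w i)
    (w1 : ∑ i, w i = 1) {c : ℝ} (h : ∑ i, w i * f i ≤ c) : ∃ i, f i ≤ c := by
  by_contra! hc
  obtain ⟨i, -, hi⟩ : ∃ i ∈ Finset.univ, 0 < w i := by
    by_contra! hn
    have := Finset.sum_nonpos hn
    linarith
  have : ∑ i, w i * c < ∑ i, w i * f i :=
    Finset.sum_lt_sum (fun j _ => mul_le_mul_of_nonneg_left (hc j).le (w0 j))
      ⟨i, Finset.mem_univ _, mul_lt_mul_of_pos_left (hc i) hi⟩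
  rw [← Finset.sum_mul, w1] at this
  linarith

/-- Derandomization of the two superposition codebooks and of the time-sharing variable. -/
theorem main
    (ε : ℝ) (hε0 : 0 < ε) (hε1 : ε < 1)
    (pQ : Qt → ℝ) (p1 : Qt → U1 × X1 → ℝ) (p2 : Qt → U2 × X2 → ℝ)
    (hpQ : IsProbDist pQ) (hp1 : ∀ q, IsProbDist (p1 q)) (hp2 : ∀ q, IsProbDist (p2 q))
    (ρ : X1 × X2 → Matrix (Fin d1 × Fin d2) (Fin d1 × Fin d2) ℂ)
    (hρ : ∀ x, IsDensity (ρ x))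
    (N1' N1'' N2' N2'' : ℕ)
    (hN1' : 0 < N1') (hN1'' : 0 < N1'') (hN2' : 0 < N2') (hN2'' : 0 < N2'')
    (h1 : ((Real.logb 2 N1'' : ℝ) : EReal) ≤
      IH_X1_Y1_U1U2Q ε pQ p1 p2 ρ - ((2 : ℝ) : EReal) -
        ((Real.logb 2 (1 / ε) : ℝ) : EReal))
    (h2 : ((Real.logb 2 N1' + Real.logb 2 N1'' : ℝ) : EReal) ≤
      IH_X1_Y1_U2Q ε pQ p1 p2 ρ - ((2 : ℝ) : EReal) -
        ((Real.logb 2 (1 / ε) : ℝ) : EReal))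
    (h3 : ((Real.logb 2 N1'' + Real.logb 2 N2' : ℝ) : EReal) ≤
      IH_X1U2_Y1_U1Q ε pQ p1 p2 ρ - ((2 : ℝ) : EReal) -
        ((Real.logb 2 (1 / ε) : ℝ) : EReal))
    (h4 : ((Real.logb 2 N1' + Real.logb 2 N1'' + Real.logb 2 N2' : ℝ) : EReal) ≤
      IH_X1U2_Y1_Q ε pQ p1 p2 ρ - ((2 : ℝ) : EReal) -
        ((Real.logb 2 (1 / ε) : ℝ) : EReal))
    (h5 : ((Real.logb 2 N2'' : ℝ) : EReal) ≤
      IH_X2_Y2_U1U2Q ε pQ p1 p2 ρ - ((2 : ℝ) : EReal) -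
        ((Real.logb 2 (1 / ε) : ℝ) : EReal))
    (h6 : ((Real.logb 2 N2' + Real.logb 2 N2'' : ℝ) : EReal) ≤
      IH_X2_Y2_U1Q ε pQ p1 p2 ρ - ((2 : ℝ) : EReal) -
        ((Real.logb 2 (1 / ε) : ℝ) : EReal))
    (h7 : ((Real.logb 2 N2'' + Real.logb 2 N1' : ℝ) : EReal) ≤
      IH_X2U1_Y2_U2Q ε pQ p1 p2 ρ - ((2 : ℝ) : EReal) -
        ((Real.logb 2 (1 / ε) : ℝ) : EReal))
    (h8 : ((Real.logb 2 N2' + Real.logb 2 N2'' + Real.logb 2 N1' : ℝ) : EReal) ≤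
      IH_X2U1_Y2_Q ε pQ p1 p2 ρ - ((2 : ℝ) : EReal) -
        ((Real.logb 2 (1 / ε) : ℝ) : EReal)) :
    ExistsICCode ρ (N1' * N1'') (N2' * N2'') (2 ^ (2 ^ 14) * ε ^ ((1 : ℝ) / 6)) := by
  obtain ⟨t, ht⟩ : ∃ t, t = ε ^ ((1:ℝ) / 3) := ⟨_, rfl⟩
  have ht0 : 0 < t := ht ▸ Real.rpow_pos_of_pos hε0 _
  have ht1 : t < 1 := ht ▸ Real.rpow_lt_one hε0.le hε1 (by norm_num)
  have ht3 : t ^ 3 = ε := by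
    rw [ht, ← Real.rpow_natCast, ← Real.rpow_mul hε0.le]; norm_num
  have ht6 : t ≤ ε ^ ((1:ℝ) / 6) :=
    ht ▸ Real.rpow_le_rpow_of_exponent_ge hε0 hε1.le (by norm_num)
  have K1 : (0:ℝ) < N1'' := by exact_mod_cast hN1''
  have K2 : (0:ℝ) < N2'' := by exact_mod_cast hN2''
  -- codebook laws conditional on the time-sharing symbol
  choose v1 v1a v1b v1c v1d v1e using fun q =>
    codebook_exists (hp1 q).1 (hp1 q).2 N1' N1''
  choose v2 v2a v2b v2c v2d v2e using fun q =>
    codebook_exists (hp2 q).1 (hp2 q).2 N2' N2''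
  have L1 : ∀ q, IsLaw (p1 q) (v1 q) := fun q => ⟨v1a q, v1b q, v1c q, v1d q, v1e q⟩
  have L2 : ∀ q, IsLaw (p2 q) (v2 q) := fun q => ⟨v2a q, v2b q, v2c q, v2d q, v2e q⟩
  -- decoders of the two receivers
  obtain ⟨D1, D10, D11, D1e⟩ := receiver_info ht0 ht1 ht3 hpQ.1 hpQ.2 (fun q => (hp1 q).2)
    (fun q => (hp2 q).2) (ω := fun x y => trR (ρ (x, y))) (fun x y => trR_nonneg (hρ _).1)
    (fun x y => by
      rw [← acc_trR, Matrix.one_kronecker_one]; exact acc_density (hρ _))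
    hN1' hN1'' hN2' L1 L2
    (by
      obtain ⟨E, E0, E1, Eg, Eb⟩ := DH_test hε0 K1 rfl h1
      simp only [Fintype.sum_prod_type (α₁ := Qt × U1 × U2), Fintype.sum_prod_type (α₁ := Qt),
        Fintype.sum_prod_type (α₁ := U1) (α₂ := U2)] at Eg Eb
      exact ⟨fun q u v x => E ((q, u, v), x), fun _ _ _ _ => E0 _, fun _ _ _ _ => E1 _, Eg, Eb⟩)
    h2 h3 h4
  obtain ⟨D2, D20, D21, D2e⟩ := receiver_info ht0 ht1 ht3 hpQ.1 hpQ.2 (fun q => (hp2 q).2)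
    (fun q => (hp1 q).2) (ω := fun y x => trL (ρ (x, y))) (fun x y => trL_nonneg (hρ _).1)
    (fun x y => by
      rw [← acc_trL, Matrix.one_kronecker_one]; exact acc_density (hρ _))
    hN2' hN2'' hN1' L2 L1
    (by
      obtain ⟨E, E0, E1, Eg, Eb⟩ := DH_test hε0 K2 rfl h5
      simp only [Fintype.sum_prod_type (α₁ := Qt × U1 × U2), Fintype.sum_prod_type (α₁ := Qt),
        Fintype.sum_prod_type (α₁ := U1) (α₂ := U2)] at Eg Eb
      refine ⟨fun q u v x => E ((q, v, u), x), fun _ _ _ _ => E0 _, fun _ _ _ _ => E1 _, ?_, ?_⟩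
      · rw [Finset.sum_congr rfl fun q _ => Finset.sum_comm]; exact Eg
      · rw [Finset.sum_congr rfl fun q _ => Finset.sum_comm]; exact Eb)
    h6 h7 h8
  -- the joint law of the time-sharing variable and the two codebooks
  let W : Qt × (Fin N1' → U1 × (Fin N1'' → X1)) × (Fin N2' → U2 × (Fin N2'' → X2)) → ℝ :=
    fun z => pQ z.1 * (v1 z.1 z.2.1 * v2 z.1 z.2.2)
  have W0 : ∀ z, 0 ≤ W z := fun z =>
    mul_nonneg (hpQ.1 _) (mul_nonneg (v1a _ _) (v2a _ _))
  have Wsum : ∀ F : Qt → _ → _ → ℝ, ∑ z, W z * F z.1 z.2.1 z.2.2 =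
      ∑ q, pQ q * ∑ a, v1 q a * ∑ b, v2 q b * F q a b := by
    intro F
    simp only [W, Fintype.sum_prod_type, Finset.mul_sum, mul_assoc]
  have Wsum' : ∀ F : Qt → _ → _ → ℝ, ∑ z, W z * F z.1 z.2.1 z.2.2 =
      ∑ q, pQ q * ∑ b, v2 q b * ∑ a, v1 q a * F q a b := by
    intro F
    rw [Wsum]
    refine Finset.sum_congr rfl fun q _ => ?_
    simp only [Finset.mul_sum]
    rw [Finset.sum_comm]
    exact Finset.sum_congr rfl fun _ _ => Finset.sum_congr rfl fun _ _ => by ring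
  have W1 : ∑ z, W z = 1 := by
    have := Wsum (fun _ _ _ => 1)
    simpa only [mul_one, v2b, v1b, hpQ.2] using this
  let e1 := (finProdFinEquiv (m := N1') (n := N1'')).symm
  let e2 := (finProdFinEquiv (m := N2') (n := N2'')).symm
  let f1 : Fin (N1' * N1'') × Fin (N2' * N2'') →
      Qt × (Fin N1' → U1 × (Fin N1'' → X1)) × (Fin N2' → U2 × (Fin N2'' → X2)) → ℝ := fun m z =>
    acc (trR (ρ ((z.2.1 (e1 m.1).1).2 (e1 m.1).2, (z.2.2 (e2 m.2).1).2 (e2 m.2).2)))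
      (1 - D1 z.1 z.2.1 z.2.2 (e1 m.1).1 (e1 m.1).2)
  let f2 : Fin (N1' * N1'') × Fin (N2' * N2'') →
      Qt × (Fin N1' → U1 × (Fin N1'' → X1)) × (Fin N2' → U2 × (Fin N2'' → X2)) → ℝ := fun m z =>
    acc (trL (ρ ((z.2.1 (e1 m.1).1).2 (e1 m.1).2, (z.2.2 (e2 m.2).1).2 (e2 m.2).2)))
      (1 - D2 z.1 z.2.2 z.2.1 (e2 m.2).1 (e2 m.2).2)
  have b1 : ∀ m, ∑ z, W z * f1 m z ≤ 208 * t := fun m => by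
    refine le_of_eq_of_le ?_ (D1e (e1 m.1).1 (e1 m.1).2 (e2 m.2).1 (e2 m.2).2)
    exact Wsum (fun q a b => acc (trR (ρ ((a (e1 m.1).1).2 (e1 m.1).2,
      (b (e2 m.2).1).2 (e2 m.2).2))) (1 - D1 q a b (e1 m.1).1 (e1 m.1).2))
  have b2 : ∀ m, ∑ z, W z * f2 m z ≤ 208 * t := fun m => by
    refine le_of_eq_of_le ?_ (D2e (e2 m.2).1 (e2 m.2).2 (e1 m.1).1 (e1 m.1).2)
    exact Wsum' (fun q a b => acc (trL (ρ ((a (e1 m.1).1).2 (e1 m.1).2,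
      (b (e2 m.2).1).2 (e2 m.2).2))) (1 - D2 q b a (e2 m.2).1 (e2 m.2).2))
  obtain ⟨⟨q, a, b⟩, hz⟩ : ∃ z, ∑ m, (f1 m z + f2 m z) ≤
      (((N1' * N1'' : ℕ) : ℝ) * ((N2' * N2'' : ℕ) : ℝ)) * (416 * t) := by
    refine exists_le_of_avg W0 W1 ?_
    calc ∑ z, W z * ∑ m, (f1 m z + f2 m z)
        = ∑ m, (∑ z, W z * f1 m z + ∑ z, W z * f2 m z) := by
          simp only [Finset.mul_sum, mul_add, ← Finset.sum_add_distrib]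
          rw [Finset.sum_comm]
      _ ≤ ∑ m : Fin (N1' * N1'') × Fin (N2' * N2''), 416 * t :=
          Finset.sum_le_sum fun m _ => by linarith [b1 m, b2 m]
      _ = _ := by simp
  have D1le : ∀ i k, D1 q a b i k ≤ 1 := fun i k =>
    ((Finset.single_le_sum (f := fun k => D1 q a b i k) (fun k _ => D10 q a b i k)
      (Finset.mem_univ k)).trans
      (Finset.single_le_sum (f := fun i => ∑ k, D1 q a b i k)
        (fun i _ => Finset.sum_nonneg fun k _ => D10 q a b i k)
        (Finset.mem_univ i))).trans (D11 q a b)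
  have D2le : ∀ i k, D2 q b a i k ≤ 1 := fun i k =>
    ((Finset.single_le_sum (f := fun k => D2 q b a i k) (fun k _ => D20 q b a i k)
      (Finset.mem_univ k)).trans
      (Finset.single_le_sum (f := fun i => ∑ k, D2 q b a i k)
        (fun i _ => Finset.sum_nonneg fun k _ => D20 q b a i k)
        (Finset.mem_univ i))).trans (D21 q b a)
  refine ⟨fun m => (a (e1 m).1).2 (e1 m).2, fun m => (b (e2 m).1).2 (e2 m).2,
    fun m => D1 q a b (e1 m).1 (e1 m).2, fun m => D2 q b a (e2 m).1 (e2 m).2,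
    fun m => Matrix.nonneg_iff_posSemidef.1 (D10 _ _ _ _ _), ?_,
    fun m => Matrix.nonneg_iff_posSemidef.1 (D20 _ _ _ _ _), ?_, ?_⟩
  · rw [← Matrix.le_iff, Equiv.sum_comp e1 (fun m => D1 q a b m.1 m.2), Fintype.sum_prod_type]
    exact D11 q a b
  · rw [← Matrix.le_iff, Equiv.sum_comp e2 (fun m => D2 q b a m.1 m.2), Fintype.sum_prod_type]
    exact D21 q b a
  have n1 : (0:ℝ) < ((N1' * N1'' : ℕ) : ℝ) := by exact_mod_cast Nat.mul_pos hN1' hN1''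
  have n2 : (0:ℝ) < ((N2' * N2'' : ℕ) : ℝ) := by exact_mod_cast Nat.mul_pos hN2' hN2''
  rw [← div_eq_inv_mul, le_div_iff₀ (by positivity)]
  have key : ∑ m : Fin (N1' * N1'') × Fin (N2' * N2''),
      (1 - (f1 m (q, a, b) + f2 m (q, a, b))) ≤ ∑ m : Fin (N1' * N1'') × Fin (N2' * N2''),
      acc (ρ ((a (e1 m.1).1).2 (e1 m.1).2, (b (e2 m.2).1).2 (e2 m.2).2))
        (D1 q a b (e1 m.1).1 (e1 m.1).2 ⊗ₖ D2 q b a (e2 m.2).1 (e2 m.2).2) :=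
    Finset.sum_le_sum fun m _ => by
      have := acc_kron (hρ ((a (e1 m.1).1).2 (e1 m.1).2, (b (e2 m.2).1).2 (e2 m.2).2))
        (D1le (e1 m.1).1 (e1 m.1).2) (D2le (e2 m.2).1 (e2 m.2).2)
      simp only [f1, f2]
      linarith
  refine le_trans ?_ key
  rw [Finset.sum_sub_distrib]
  have hc : ∑ m : Fin (N1' * N1'') × Fin (N2' * N2''), (1:ℝ) =
      ((N1' * N1'' : ℕ) : ℝ) * ((N2' * N2'' : ℕ) : ℝ) := by simp
  rw [hc]
  have hδ : 416 * t ≤ 2 ^ (2 ^ 14) * ε ^ ((1 : ℝ) / 6) := by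
    have c9 : (416 : ℝ) ≤ 2 ^ (2 ^ 14) :=
      le_trans (by norm_num : (416:ℝ) ≤ 2 ^ 9) (pow_le_pow_right₀ (by norm_num) (by norm_num))
    exact mul_le_mul c9 ht6 ht0.le (by positivity)
  have := mul_le_mul_of_nonneg_left hδ (mul_pos n1 n2).le
  linarith

end proof

end CMG

/-- One-shot Chong–Motani–Garg–El Gamal inner bound, pre-elimination
(rate-splitting) form. -/
theorem cmge_pre_elimination
    (ε : ℝ) (hε0 : 0 < ε) (hε1 : ε < 1)
    (pQ : Qt → ℝ) (p1 : Qt → U1 × X1 → ℝ) (p2 : Qt → U2 × X2 → ℝ)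
    (hpQ : IsProbDist pQ) (hp1 : ∀ q, IsProbDist (p1 q)) (hp2 : ∀ q, IsProbDist (p2 q))
    (ρ : X1 × X2 → Matrix (Fin d1 × Fin d2) (Fin d1 × Fin d2) ℂ)
    (hρ : ∀ x, IsDensity (ρ x))
    (N1' N1'' N2' N2'' : ℕ)
    (hN1' : 0 < N1') (hN1'' : 0 < N1'') (hN2' : 0 < N2') (hN2'' : 0 < N2'')
    (h1 : ((Real.logb 2 N1'' : ℝ) : EReal) ≤
      IH_X1_Y1_U1U2Q ε pQ p1 p2 ρ - ((2 : ℝ) : EReal) -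
        ((Real.logb 2 (1 / ε) : ℝ) : EReal))
    (h2 : ((Real.logb 2 N1' + Real.logb 2 N1'' : ℝ) : EReal) ≤
      IH_X1_Y1_U2Q ε pQ p1 p2 ρ - ((2 : ℝ) : EReal) -
        ((Real.logb 2 (1 / ε) : ℝ) : EReal))
    (h3 : ((Real.logb 2 N1'' + Real.logb 2 N2' : ℝ) : EReal) ≤
      IH_X1U2_Y1_U1Q ε pQ p1 p2 ρ - ((2 : ℝ) : EReal) -
        ((Real.logb 2 (1 / ε) : ℝ) : EReal))
    (h4 : ((Real.logb 2 N1' + Real.logb 2 N1'' + Real.logb 2 N2' : ℝ) : EReal) ≤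
      IH_X1U2_Y1_Q ε pQ p1 p2 ρ - ((2 : ℝ) : EReal) -
        ((Real.logb 2 (1 / ε) : ℝ) : EReal))
    (h5 : ((Real.logb 2 N2'' : ℝ) : EReal) ≤
      IH_X2_Y2_U1U2Q ε pQ p1 p2 ρ - ((2 : ℝ) : EReal) -
        ((Real.logb 2 (1 / ε) : ℝ) : EReal))
    (h6 : ((Real.logb 2 N2' + Real.logb 2 N2'' : ℝ) : EReal) ≤
      IH_X2_Y2_U1Q ε pQ p1 p2 ρ - ((2 : ℝ) : EReal) -
        ((Real.logb 2 (1 / ε) : ℝ) : EReal))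
    (h7 : ((Real.logb 2 N2'' + Real.logb 2 N1' : ℝ) : EReal) ≤
      IH_X2U1_Y2_U2Q ε pQ p1 p2 ρ - ((2 : ℝ) : EReal) -
        ((Real.logb 2 (1 / ε) : ℝ) : EReal))
    (h8 : ((Real.logb 2 N2' + Real.logb 2 N2'' + Real.logb 2 N1' : ℝ) : EReal) ≤
      IH_X2U1_Y2_Q ε pQ p1 p2 ρ - ((2 : ℝ) : EReal) -
        ((Real.logb 2 (1 / ε) : ℝ) : EReal)) :
    ExistsICCode ρ (N1' * N1'') (N2' * N2'') (2 ^ (2 ^ 14) * ε ^ ((1 : ℝ) / 6)) := by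
  exact CMG.main ε hε0 hε1 pQ p1 p2 hpQ hp1 hp2 ρ hρ N1' N1'' N2' N2'' hN1' hN1'' hN2' hN2''
    h1 h2 h3 h4 h5 h6 h7 h8

end Interference
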